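/- arXiv:2404.06768 — 15 statements merged into one kernel-verified Lean document; each statement's English description precedes it below -/
import Mathlib

section
/- Let n = 2t be an even integer with n ≥ 6, let s ≥ 1 be an integer with 2s < 3^t + 1, and let W_1, …, W_{2s} be pairwise disjoint t-dimensional F_3-linear subspaces of F_3^n. Then the linear code C_f associated to the ternary partial-spread function f is a minimal linear code of length 3^n − 1: for every codeword c ∈ C_f with c ≠ 0 and every codeword c' ∈ C_f whose support is contained in the support of c, there exists λ ∈ F_3 with c' = λ·c. -/
open Matrix Finset

lemma aux_card {V : Type*} [AddCommGroup V] [Module (ZMod 3) V] [Finite V]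
    (φ : V →ₗ[ZMod 3] ZMod 3) (p : V) (hp : φ p = 1) :
    Nat.card {x : V // φ x = 1} * 3 = 3 ^ Module.finrank (ZMod 3) V := by
  have e : {x : V // φ x = 1} ≃ LinearMap.ker φ :=
    { toFun := fun x => ⟨x.1 - p, by simp [x.2, hp]⟩
      invFun := fun y => ⟨y.1 + p, by
        have := y.2
        rw [LinearMap.mem_ker] at this
        simp [this, hp]⟩
      left_inv := fun x => by simp
      right_inv := fun y => by simp }
  rw [Nat.card_congr e, Module.natCard_eq_pow_finrank (K := ZMod 3), Nat.card_zmod,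
    ← LinearMap.finrank_range_add_finrank_ker φ]
  have hr : LinearMap.range φ = ⊤ := by
    rw [LinearMap.range_eq_top]
    intro a
    exact ⟨a • p, by simp [hp]⟩
  rw [hr, finrank_top, Module.finrank_self]
  ring

lemma exists_one {V : Type*} [AddCommGroup V] [Module (ZMod 3) V]
    (φ : V →ₗ[ZMod 3] ZMod 3) (p : V) (hp : φ p ≠ 0) : ∃ q, φ q = 1 :=
  ⟨(φ p)⁻¹ • p, by simp [hp]⟩

lemma zmod3_even (a b : ZMod 3) (h1 : b ≠ a) (h2 : b ≠ -a) (ha : a ≠ 0) : b = 0 := by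
  revert a b; decide

section
variable {t n s : ℕ}

lemma two_in_ker (ht : n = 2 * t) (W₁ W₂ : Submodule (ZMod 3) (Fin n → ZMod 3))
    (h1 : Module.finrank (ZMod 3) W₁ = t) (h2 : Module.finrank (ZMod 3) W₂ = t)
    (hd : W₁ ⊓ W₂ = ⊥) (u : (Fin n → ZMod 3) →ₗ[ZMod 3] ZMod 3) (hu : u ≠ 0)
    (l1 : W₁ ≤ LinearMap.ker u) (l2 : W₂ ≤ LinearMap.ker u) : False := by
  have h := Submodule.finrank_sup_add_finrank_inf_eq W₁ W₂
  rw [hd, finrank_bot, h1, h2] at h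
  have htop : W₁ ⊔ W₂ = ⊤ := by
    apply Submodule.eq_top_of_finrank_eq
    rw [Module.finrank_fin_fun]; omega
  have : (⊤ : Submodule (ZMod 3) (Fin n → ZMod 3)) ≤ LinearMap.ker u := htop ▸ sup_le l1 l2
  exact hu (LinearMap.ker_eq_top.1 (top_le_iff.1 this))

lemma not_cover (ht : n = 2 * t) (hn : 6 ≤ n) (hs2 : 2 * s < 3 ^ t + 1)
    (W : Fin (2 * s) → Submodule (ZMod 3) (Fin n → ZMod 3))
    (hdim : ∀ k, Module.finrank (ZMod 3) (W k) = t)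
    (v : (Fin n → ZMod 3) →ₗ[ZMod 3] ZMod 3) (hv : v ≠ 0)
    (hc : ∀ x, v x ≠ 0 → ∃ k, x ∈ W k) : False := by
  obtain ⟨p0, hp0⟩ : ∃ p, v p ≠ 0 := by
    by_contra! h
    exact hv (LinearMap.ext h)
  obtain ⟨p, hp⟩ := exists_one v p0 hp0
  have h1 := aux_card v p hp
  rw [Module.finrank_fin_fun] at h1
  have h2 : ∀ k, Nat.card {x : W k // (v.domRestrict (W k)) x = 1} * 3 ≤ 3 ^ t := by
    intro k
    by_cases h : ∃ q, (v.domRestrict (W k)) q = 1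
    · obtain ⟨q, hq⟩ := h
      have := aux_card _ q hq
      rw [hdim] at this
      exact this.le
    · push Not at h
      have : IsEmpty {x : W k // (v.domRestrict (W k)) x = 1} := ⟨fun x => h x.1 x.2⟩
      rw [Nat.card_of_isEmpty]
      simp
  have h3 : Nat.card {x // v x = 1} ≤
      Nat.card (Σ k, {x : W k // (v.domRestrict (W k)) x = 1}) := by
    have hc' : ∀ x : {x // v x = 1}, ∃ k, x.1 ∈ W k := fun x => hc x.1 (by rw [x.2]; decide)
    choose g hg using hc'
    apply Nat.card_le_card_of_injective
      (fun x => (⟨g x, ⟨⟨x.1, hg x⟩, by simpa using x.2⟩⟩ :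
        Σ k, {x : W k // (v.domRestrict (W k)) x = 1}))
    refine Function.LeftInverse.injective (g := fun y => ⟨y.2.1.1, by simpa using y.2.2⟩) ?_
    intro x
    rfl
  rw [Nat.card_sigma] at h3
  have h4 : (∑ k, Nat.card {x : W k // (v.domRestrict (W k)) x = 1}) * 3 ≤ 2 * s * 3 ^ t := by
    rw [Finset.sum_mul]
    calc _ ≤ ∑ k : Fin (2 * s), 3 ^ t := Finset.sum_le_sum (fun k _ => h2 k)
      _ = _ := by simp
  have h5 : 3 ^ n = 3 ^ t * 3 ^ t := by rw [ht, two_mul, pow_add]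
  have h6 : 2 * s < 3 ^ t := by
    have : Odd (3 ^ t) := Odd.pow (by decide)
    obtain ⟨m, hm⟩ := this
    omega
  have h7 : 2 * s * 3 ^ t < 3 ^ t * 3 ^ t := by gcongr
  omega

lemma key (ht : n = 2 * t) (hn : 6 ≤ n) (hs : 1 ≤ s) (hs2 : 2 * s < 3 ^ t + 1)
    (W : Fin (2 * s) → Submodule (ZMod 3) (Fin n → ZMod 3))
    (hdim : ∀ k, Module.finrank (ZMod 3) (W k) = t)
    (hdisj : ∀ i j, i ≠ j → W i ⊓ W j = ⊥)
    (f : (Fin n → ZMod 3) → ZMod 3)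
    (hfe : ∀ x, f (-x) = f x)
    (hfn : ∀ x k, x ≠ 0 → x ∈ W k → f x ≠ 0)
    (hf0 : ∀ x, f x ≠ 0 → ∃ k, x ∈ W k)
    (u v : (Fin n → ZMod 3) →ₗ[ZMod 3] ZMod 3) (hv : v ≠ 0)
    (hZ : ∀ x, x ≠ 0 → f x = u x → v x = 0) : False := by
  have hZ' : ∀ x, v x ≠ 0 → f x ≠ u x := by
    intro x hx h
    refine hx (hZ x ?_ h)
    rintro rfl
    simp at hx
  by_cases hu : u = 0
  · refine not_cover ht hn hs2 W hdim v hv (fun x hx => hf0 x ?_)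
    have := hZ' x hx
    simpa [hu] using this
  have hzero : ∀ x, u x ≠ 0 → v x ≠ 0 → f x = 0 := by
    intro x h1 h2
    refine zmod3_even (u x) _ (hZ' x h2) ?_ h1
    have := hZ' (-x) (by simpa using h2)
    simpa [hfe] using this
  have hor : ∀ k, ∀ x ∈ W k, u x = 0 ∨ v x = 0 := by
    intro k x hx
    by_contra! h
    refine hfn x k ?_ hx (hzero x h.1 h.2)
    rintro rfl
    simp at h
  have hle : ∀ k, W k ≤ LinearMap.ker u ∨ W k ≤ LinearMap.ker v := by
    intro k
    by_contra! h
    obtain ⟨h1, h2⟩ := h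
    obtain ⟨x, hx, hx'⟩ := SetLike.not_le_iff_exists.1 h1
    obtain ⟨y, hy, hy'⟩ := SetLike.not_le_iff_exists.1 h2
    rw [LinearMap.mem_ker] at hx' hy'
    have a := (hor k x hx).resolve_left hx'
    have b := (hor k y hy).resolve_right hy'
    have c := hor k (x + y) (add_mem hx hy)
    simp [a, b, hx', hy'] at c
  by_cases hA : ∃ a, u a = 0 ∧ v a ≠ 0
  · obtain ⟨a, ha, hva⟩ := hA
    have hcov : ∀ x, u x = 0 → v x ≠ 0 → ∃ k, x ∈ W k ∧ W k ≤ LinearMap.ker u := by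
      intro x h1 h2
      obtain ⟨k, hk⟩ := hf0 x (by have := hZ' x h2; rwa [h1] at this)
      refine ⟨k, hk, (hle k).resolve_right fun h => h2 (h hk)⟩
    obtain ⟨k, hk, hku⟩ := hcov a ha hva
    have hcov' : ∀ x, u x = 0 → v x ≠ 0 → x ∈ W k := by
      intro x h1 h2
      obtain ⟨j, hj, hju⟩ := hcov x h1 h2
      by_cases hjk : j = k
      · exact hjk ▸ hj
      · exact (two_in_ker ht _ _ (hdim j) (hdim k) (hdisj j k hjk) u hu hju hku).elim
    have hker : LinearMap.ker u ≤ W k := by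
      intro x hx
      rw [LinearMap.mem_ker] at hx
      by_cases hvx : v x = 0
      · have := hcov' (x + a) (by simp [hx, ha]) (by simpa [hvx] using hva)
        simpa using sub_mem this hk
      · exact hcov' x hx hvx
    have h1 := Submodule.finrank_mono hker
    rw [hdim] at h1
    have h2 := LinearMap.finrank_range_add_finrank_ker u
    have h3 := Submodule.finrank_le (LinearMap.range u)
    rw [Module.finrank_self] at h3
    rw [Module.finrank_fin_fun] at h2
    omega
  · push Not at hA
    have hv' : ∀ k, W k ≤ LinearMap.ker v := fun k =>
      (hle k).elim (fun h x hx => hA x (h hx)) id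
    exact two_in_ker ht _ _ (hdim ⟨0, by omega⟩) (hdim ⟨1, by omega⟩)
      (hdisj _ _ (by simp)) v hv (hv' _) (hv' _)

end

theorem stmt0 (t n s : ℕ) (ht : n = 2 * t) (hn : 6 ≤ n) (hs : 1 ≤ s)
    (hs2 : 2 * s < 3 ^ t + 1)
    (W : Fin (2 * s) → Submodule (ZMod 3) (Fin n → ZMod 3))
    (hdim : ∀ k, Module.finrank (ZMod 3) (W k) = t)
    (hdisj : ∀ i j, i ≠ j → W i ⊓ W j = ⊥)
    (f : (Fin n → ZMod 3) → ZMod 3)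
    (hf1 : ∀ (x : Fin n → ZMod 3) (k : Fin (2 * s)), x ≠ 0 → x ∈ W k → (k : ℕ) < s → f x = 1)
    (hf2 : ∀ (x : Fin n → ZMod 3) (k : Fin (2 * s)), x ≠ 0 → x ∈ W k → s ≤ (k : ℕ) → f x = 2)
    (hf0 : ∀ x : Fin n → ZMod 3, (x = 0 ∨ ∀ k, x ∉ W k) → f x = 0)
    (C : Set ({x : Fin n → ZMod 3 // x ≠ 0} → ZMod 3))
    (hC : C = {c | ∃ (α : ZMod 3) (w : Fin n → ZMod 3),
      c = fun x => α * f x.1 + w ⬝ᵥ x.1})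
    :
    ∀ c ∈ C, c ≠ 0 → ∀ c' ∈ C, (∀ i, c' i ≠ 0 → c i ≠ 0) →
      ∃ lam : ZMod 3, c' = lam • c := by
  have hfn : ∀ x k, x ≠ 0 → x ∈ W k → f x ≠ 0 := by
    intro x k hx hk
    rcases lt_or_ge (k : ℕ) s with h | h
    · rw [hf1 x k hx hk h]; decide
    · rw [hf2 x k hx hk h]; decide
  have hf0' : ∀ x, f x ≠ 0 → ∃ k, x ∈ W k := by
    intro x hx
    by_contra! h
    exact hx (hf0 x (Or.inr h))
  have hfe : ∀ x, f (-x) = f x := by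
    intro x
    by_cases hx : x = 0
    · simp [hx]
    by_cases h : ∃ k, x ∈ W k
    · obtain ⟨k, hk⟩ := h
      have hk' : -x ∈ W k := neg_mem hk
      have hx' : -x ≠ 0 := neg_ne_zero.2 hx
      rcases lt_or_ge (k : ℕ) s with h | h
      · rw [hf1 x k hx hk h, hf1 _ k hx' hk' h]
      · rw [hf2 x k hx hk h, hf2 _ k hx' hk' h]
    · push Not at h
      rw [hf0 x (Or.inr h), hf0 (-x) (Or.inr fun k hk => h k (by simpa using neg_mem hk))]
  let L : (Fin n → ZMod 3) → ((Fin n → ZMod 3) →ₗ[ZMod 3] ZMod 3) := fun w =>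
    { toFun := fun x => w ⬝ᵥ x
      map_add' := fun x y => dotProduct_add _ _ _
      map_smul' := fun a x => by simp [dotProduct_smul] }
  have hL : ∀ w x, L w x = w ⬝ᵥ x := fun _ _ => rfl
  subst hC
  rintro c ⟨α, w, rfl⟩ hc0 c' ⟨β, w', rfl⟩ hsupp
  have hsupp' : ∀ x, x ≠ 0 → α * f x + w ⬝ᵥ x = 0 → β * f x + w' ⬝ᵥ x = 0 := by
    intro x hx h
    by_contra h'
    exact hsupp ⟨x, hx⟩ h' h
  by_cases hα : α = 0
  · subst hα
    have hβ : β = 0 := by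
      let φ := (L w).domRestrict (W ⟨0, by omega⟩)
      have hk : LinearMap.ker φ ≠ ⊥ := by
        apply LinearMap.ker_ne_bot_of_finrank_lt
        rw [hdim, Module.finrank_self]
        omega
      obtain ⟨x, hx, hx0⟩ := Submodule.exists_mem_ne_zero_of_ne_bot hk
      have hx1 : w ⬝ᵥ x.1 = 0 := hx
      have hx0' : x.1 ≠ 0 := fun h => hx0 (Subtype.ext h)
      have e1 := hsupp' x.1 hx0' (by simp [hx1])
      have e2 := hsupp' (-x.1) (neg_ne_zero.2 hx0') (by simp [hx1])
      have e3 := hf1 x.1 _ hx0' x.2 (show 0 < s by omega)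
      rw [hfe, dotProduct_neg] at e2
      rw [e3] at e1 e2
      generalize w' ⬝ᵥ x.1 = d at e1 e2
      clear hsupp hsupp' hc0
      revert β d
      decide
    subst hβ
    obtain ⟨p, hp⟩ : ∃ p, w ⬝ᵥ p ≠ 0 := by
      by_contra! h
      apply hc0
      funext x
      simp [h]
    refine ⟨(w' ⬝ᵥ p) / (w ⬝ᵥ p), ?_⟩
    funext x
    have hy : w' ⬝ᵥ (x.1 - ((w ⬝ᵥ x.1) / (w ⬝ᵥ p)) • p) = 0 := by
      by_cases h0 : x.1 - ((w ⬝ᵥ x.1) / (w ⬝ᵥ p)) • p = 0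
      · rw [h0]; simp
      · have := hsupp' _ h0 (by
          rw [dotProduct_sub, dotProduct_smul, smul_eq_mul, div_mul_cancel₀ _ hp]; simp)
        simpa only [zero_mul, zero_add] using this
    rw [dotProduct_sub, dotProduct_smul, smul_eq_mul] at hy
    simp only [Pi.smul_apply, smul_eq_mul, zero_mul, zero_add]
    rw [sub_eq_zero.1 hy]
    ring
  · refine ⟨β / α, ?_⟩
    by_cases hv : L w' - (β / α) • L w = 0
    · funext x
      have := LinearMap.congr_fun hv x.1
      simp only [LinearMap.sub_apply, LinearMap.smul_apply, hL, smul_eq_mul,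
        LinearMap.zero_apply] at this
      simp only [Pi.smul_apply, smul_eq_mul]
      rw [sub_eq_zero.1 this]
      field_simp
    · exfalso
      refine key ht hn hs hs2 W hdim hdisj f hfe hfn hf0' (-(α⁻¹ • L w)) _ hv ?_
      intro x hx h
      simp only [LinearMap.neg_apply, LinearMap.smul_apply, hL, smul_eq_mul] at h
      have hz : α * f x + w ⬝ᵥ x = 0 := by
        rw [h]; field_simp; ring
      have h2 := hsupp' x hx hz
      simp only [LinearMap.sub_apply, LinearMap.smul_apply, hL, smul_eq_mul]
      rw [h] at h2
      rw [← h2]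
      ring
end

section
/- Let n = 2t be an even integer with n ≥ 6 and let s be an integer with 1 ≤ s ≤ 3^{t−2}, and let W_1, …, W_{2s} be pairwise disjoint t-dimensional F_3-linear subspaces of F_3^n. Then for the code C_f associated to the ternary partial-spread function f: the minimum Hamming weight of a nonzero codeword of C_f equals 2s(3^t − 1), the maximum Hamming weight of a codeword of C_f equals 2·3^{n−1} + 3^t − 2s, and 3·(2s(3^t − 1)) ≤ 2·3^{n−1} + 3^t − 2s; in particular wt_min/wt_max ≤ 1/3 < 2/3, so C_f violates the Ashikhmin–Barg sufficient condition for minimality. -/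
open Matrix Finset

open Classical in
lemma aux_shift {V : Type*} [AddCommGroup V] [Module (ZMod 3) V] [Fintype V]
    (φ : V →ₗ[ZMod 3] ZMod 3) (U : Submodule (ZMod 3) V) (h : ¬ U ≤ LinearMap.ker φ)
    (b : ZMod 3) (F : ZMod 3 → ℤ) :
    ∑ x : V, (if x ∈ U then F (b + φ x) else 0) = ∑ x : V, (if x ∈ U then F (φ x) else 0) := by
  obtain ⟨u, hu, hu0⟩ := SetLike.not_le_iff_exists.mp h
  rw [LinearMap.mem_ker] at hu0
  have hv : (b * (φ u)⁻¹) • u ∈ U := U.smul_mem _ hu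
  have hφ : φ ((b * (φ u)⁻¹) • u) = b := by
    rw [map_smul, smul_eq_mul, mul_assoc, inv_mul_cancel₀ hu0, mul_one]
  rw [← Equiv.sum_comp (Equiv.addLeft ((b * (φ u)⁻¹) • u))
    (fun x => if x ∈ U then F (φ x) else 0)]
  refine Finset.sum_congr rfl fun x _ => ?_
  simp only [Equiv.coe_addLeft, map_add, hφ, U.add_mem_iff_right hv]

open Classical in
lemma aux_count {V : Type*} [AddCommGroup V] [Module (ZMod 3) V] [Fintype V]
    (U : Submodule (ZMod 3) V) (t : ℕ) (h : Module.finrank (ZMod 3) U = t) :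
    ∑ x : V, (if x ∈ U then (1:ℤ) else 0) = 3 ^ t := by
  have h1 : Fintype.card U = 3 ^ t := by
    rw [Module.card_eq_pow_finrank (K := ZMod 3), h, ZMod.card]
  rw [Fintype.card_subtype] at h1
  rw [Finset.sum_boole]
  exact_mod_cast h1

open Classical in
lemma aux_ker {V : Type*} [AddCommGroup V] [Module (ZMod 3) V] [Fintype V]
    (φ : V →ₗ[ZMod 3] ZMod 3) (h : φ ≠ 0) :
    3 * ∑ x : V, (if φ x ≠ 0 then (1:ℤ) else 0) = 2 * Fintype.card V := by
  have hn : ¬ (⊤ : Submodule (ZMod 3) V) ≤ LinearMap.ker φ := by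
    intro hh
    exact h (LinearMap.ker_eq_top.mp (top_le_iff.mp hh))
  have H := fun b => aux_shift φ ⊤ hn b (fun y => if y ≠ 0 then 1 else 0)
  simp only [Submodule.mem_top, if_true] at H
  have h1 := H 1
  have h2 := H 2
  have : ∑ x : V, (if φ x ≠ 0 then (1:ℤ) else 0) + ∑ x : V, (if 1 + φ x ≠ 0 then (1:ℤ) else 0)
      + ∑ x : V, (if 2 + φ x ≠ 0 then (1:ℤ) else 0) = ∑ x : V, 2 := by
    rw [← Finset.sum_add_distrib, ← Finset.sum_add_distrib]
    refine Finset.sum_congr rfl fun x _ => ?_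
    generalize φ x = y
    revert y
    decide
  rw [h1, h2] at this
  simp only [Finset.sum_const, Finset.card_univ, nsmul_eq_mul] at this
  linarith

open Classical in
lemma aux_weight {V : Type*} [AddCommGroup V] [Module (ZMod 3) V] [Fintype V]
    (t r : ℕ) (W : Fin r → Submodule (ZMod 3) V)
    (hdim : ∀ k, Module.finrank (ZMod 3) (W k) = t)
    (hdisj : ∀ i j, i ≠ j → W i ⊓ W j = ⊥)
    (g : V → ZMod 3) (a : Fin r → ZMod 3) (ha : ∀ k, a k ≠ 0)
    (hg : ∀ x k, x ≠ 0 → x ∈ W k → g x = a k)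
    (hg0 : ∀ x : V, (x = 0 ∨ ∀ k, x ∉ W k) → g x = 0)
    (φ : V →ₗ[ZMod 3] ZMod 3) :
    ∑ x : V, (if g x + φ x ≠ 0 then (1:ℤ) else 0) =
      ∑ x : V, (if φ x ≠ 0 then (1:ℤ) else 0)
      + (3 ^ t * #{k | W k ≤ LinearMap.ker φ} - r) := by
  have key : ∀ x : V, (if g x + φ x ≠ 0 then (1:ℤ) else 0) = (if φ x ≠ 0 then (1:ℤ) else 0)
      + ∑ k, ((if x ∈ W k then ((if a k + φ x ≠ 0 then (1:ℤ) else 0) -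
        (if φ x ≠ 0 then (1:ℤ) else 0)) else 0) - if x = 0 then 1 else 0) := by
    intro x
    by_cases hx : x = 0
    · subst hx
      simp [hg0, ha]
    · simp only [if_neg hx, sub_zero]
      by_cases hk : ∃ k, x ∈ W k
      · obtain ⟨k, hk⟩ := hk
        rw [Finset.sum_eq_single k]
        · rw [hg x k hx hk, if_pos hk]; ring
        · intro j _ hj
          rw [if_neg]
          intro hj'
          apply hx
          have : x ∈ W j ⊓ W k := ⟨hj', hk⟩
          rwa [hdisj j k hj, Submodule.mem_bot] at this
        · simp
      · push Not at hk
        rw [hg0 x (Or.inr hk)]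
        simp [hk]
  rw [Finset.sum_congr rfl fun x _ => key x, Finset.sum_add_distrib, Finset.sum_comm]
  congr 1
  have each : ∀ k, ∑ x : V, ((if x ∈ W k then ((if a k + φ x ≠ 0 then (1:ℤ) else 0) -
        (if φ x ≠ 0 then (1:ℤ) else 0)) else 0) - if x = 0 then 1 else 0)
        = 3 ^ t * (if W k ≤ LinearMap.ker φ then 1 else 0) - 1 := by
    intro k
    rw [Finset.sum_sub_distrib]
    congr 1
    · split_ifs with h
      · rw [mul_one, ← aux_count (W k) t (hdim k)]
        refine Finset.sum_congr rfl fun x _ => ?_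
        by_cases hx : x ∈ W k
        · have : φ x = 0 := h hx
          simp [hx, this, ha]
        · simp [hx]
      · have := aux_shift φ (W k) h (a k) (fun y => if y ≠ 0 then 1 else 0)
        rw [mul_zero]
        refine Eq.trans ?_ (sub_eq_zero.mpr this)
        rw [← Finset.sum_sub_distrib]
        refine Finset.sum_congr rfl fun x _ => ?_
        split_ifs <;> simp
    · simp
  rw [Finset.sum_congr rfl fun k _ => each k, Finset.sum_sub_distrib, ← Finset.mul_sum,
    Finset.sum_boole]
  simp

open Classical in
lemma aux_norm {V : Type*} [Fintype V] [DecidableEq V] [Zero V] (h : V → ZMod 3) (h0 : h 0 = 0) :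
    ((hammingNorm (fun x : {x : V // x ≠ 0} => h x.1) : ℕ) : ℤ) =
      ∑ x : V, (if h x ≠ 0 then (1:ℤ) else 0) := by
  rw [Finset.sum_boole]
  norm_cast
  unfold hammingNorm
  refine Finset.card_bij (fun x _ => x.1) ?_ ?_ ?_
  · intro x hx; simpa using hx
  · intro x _ y _ hxy; exact Subtype.ext hxy
  · intro x hx
    have hx' : h x ≠ 0 := by simpa using hx
    exact ⟨⟨x, fun e => hx' (e ▸ h0)⟩, by simpa using hx', rfl⟩

theorem stmt1 (t n s : ℕ) (ht : n = 2 * t) (hn : 6 ≤ n) (hs : 1 ≤ s)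
    (hs2 : s ≤ 3 ^ (t - 2))
    (W : Fin (2 * s) → Submodule (ZMod 3) (Fin n → ZMod 3))
    (hdim : ∀ k, Module.finrank (ZMod 3) (W k) = t)
    (hdisj : ∀ i j, i ≠ j → W i ⊓ W j = ⊥)
    (f : (Fin n → ZMod 3) → ZMod 3)
    (hf1 : ∀ (x : Fin n → ZMod 3) (k : Fin (2 * s)), x ≠ 0 → x ∈ W k → (k : ℕ) < s → f x = 1)
    (hf2 : ∀ (x : Fin n → ZMod 3) (k : Fin (2 * s)), x ≠ 0 → x ∈ W k → s ≤ (k : ℕ) → f x = 2)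
    (hf0 : ∀ x : Fin n → ZMod 3, (x = 0 ∨ ∀ k, x ∉ W k) → f x = 0)
    (C : Set ({x : Fin n → ZMod 3 // x ≠ 0} → ZMod 3))
    (hC : C = {c | ∃ (α : ZMod 3) (w : Fin n → ZMod 3),
      c = fun x => α * f x.1 + w ⬝ᵥ x.1})
    :
    IsLeast {m : ℕ | ∃ c ∈ C, c ≠ 0 ∧ hammingNorm c = m} (2 * s * (3 ^ t - 1)) ∧
    IsGreatest {m : ℕ | ∃ c ∈ C, hammingNorm c = m} (2 * 3 ^ (n - 1) + 3 ^ t - 2 * s) ∧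
    3 * (2 * s * (3 ^ t - 1)) ≤ 2 * 3 ^ (n - 1) + 3 ^ t - 2 * s := by
  classical
  -- numerics
  obtain ⟨u, rfl⟩ : ∃ u, t = u + 2 := ⟨t - 2, by omega⟩
  rw [Nat.add_sub_cancel] at hs2
  have hq1 : 1 ≤ 3 ^ (u + 2) := Nat.one_le_pow _ _ (by norm_num)
  have e1 : 3 ^ (u + 2) = 9 * 3 ^ u := by ring
  have e2 : 3 ^ (n - 1) = 27 * (3 ^ u * 3 ^ u) := by
    rw [ht, show 2 * (u + 2) - 1 = u + u + 3 by omega, pow_add, pow_add]; ring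
  have hcard : Fintype.card (Fin n → ZMod 3) = 3 * 3 ^ (n - 1) := by
    rw [Fintype.card_fun, ZMod.card, Fintype.card_fin, ← pow_succ']
    congr 1; omega
  have hsQ : s * 3 ^ u ≤ 3 ^ u * 3 ^ u := Nat.mul_le_mul_right _ hs2
  -- the functionals
  let L : (Fin n → ZMod 3) → ((Fin n → ZMod 3) →ₗ[ZMod 3] ZMod 3) :=
    fun w => dotProductEquiv (ZMod 3) (Fin n) w
  have hL : ∀ w x, L w x = w ⬝ᵥ x := fun w x => rfl
  have hL0 : ∀ w, w ≠ 0 → L w ≠ 0 := fun w hw h =>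
    hw ((dotProductEquiv (ZMod 3) (Fin n)).map_eq_zero_iff.mp h)
  let c : ZMod 3 → (Fin n → ZMod 3) → ({x : Fin n → ZMod 3 // x ≠ 0} → ZMod 3) :=
    fun α w x => α * f x.1 + w ⬝ᵥ x.1
  have hN : ∀ α w, ((hammingNorm (c α w) : ℕ) : ℤ) =
      ∑ x : Fin n → ZMod 3, (if α * f x + L w x ≠ 0 then (1:ℤ) else 0) := by
    intro α w
    exact aux_norm (fun x => α * f x + L w x) (by simp [hf0])
  have hK : ∀ w, w ≠ 0 → ∑ x : Fin n → ZMod 3, (if L w x ≠ 0 then (1:ℤ) else 0)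
      = 2 * 3 ^ (n - 1) := by
    intro w hw
    have := aux_ker (L w) (hL0 w hw)
    rw [hcard] at this
    push_cast at this
    linarith
  have hwt : ∀ α w, α ≠ 0 → ((hammingNorm (c α w) : ℕ) : ℤ) =
      ∑ x : Fin n → ZMod 3, (if L w x ≠ 0 then (1:ℤ) else 0)
      + (3 ^ (u + 2) * #{k | W k ≤ LinearMap.ker (L w)} - (2 * s : ℕ)) := by
    intro α w hα
    rw [hN]
    refine aux_weight (u + 2) (2 * s) W hdim hdisj (fun x => α * f x)
      (fun k => α * if (k : ℕ) < s then 1 else 2) ?_ ?_ ?_ (L w)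
    · intro k
      refine mul_ne_zero hα ?_
      split_ifs <;> decide
    · intro x k hx hk
      by_cases h : (k : ℕ) < s
      · simp [h, hf1 x k hx hk h]
      · simp [h, hf2 x k hx hk (not_lt.mp h)]
    · intro x hx
      simp [hf0 x hx]
  -- at most one W k in the kernel
  have hm : ∀ w, w ≠ 0 → #{k | W k ≤ LinearMap.ker (L w)} ≤ 1 := by
    intro w hw
    rw [Finset.card_le_one]
    intro i hi j hj
    by_contra hij
    simp only [Finset.mem_filter, Finset.mem_univ, true_and] at hi hj
    have h1 := Submodule.finrank_sup_add_finrank_inf_eq (W i) (W j)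
    rw [hdisj i j hij, finrank_bot, hdim, hdim] at h1
    have h2 : W i ⊔ W j = ⊤ := by
      apply Submodule.eq_top_of_finrank_eq
      rw [Module.finrank_fin_fun]; omega
    have h3 : (⊤ : Submodule (ZMod 3) (Fin n → ZMod 3)) ≤ LinearMap.ker (L w) :=
      h2 ▸ sup_le hi hj
    exact hL0 w hw (LinearMap.ker_eq_top.mp (top_le_iff.mp h3))
  -- the three weights
  have w1 : hammingNorm (c 1 0) = 2 * s * (3 ^ (u + 2) - 1) := by
    have h := hwt 1 0 one_ne_zero
    have hz : L 0 = 0 := (dotProductEquiv (ZMod 3) (Fin n)).map_zero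
    rw [hz] at h
    simp at h
    zify [hq1]
    rw [h]; ring
  have w2 : ∀ w, w ≠ 0 → hammingNorm (c 0 w) = 2 * 3 ^ (n - 1) := by
    intro w hw
    have h := hN 0 w
    simp only [zero_mul, zero_add] at h
    rw [hK w hw] at h
    exact_mod_cast h
  have w3 : ∀ α w, α ≠ 0 → w ≠ 0 → hammingNorm (c α w) + 2 * s =
      2 * 3 ^ (n - 1) + 3 ^ (u + 2) * #{k | W k ≤ LinearMap.ker (L w)} := by
    intro α w hα hw
    have h := hwt α w hα
    rw [hK w hw] at h
    zify
    rw [h]; push_cast; ring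
  have w1' : ∀ α, α ≠ 0 → hammingNorm (c α 0) = 2 * s * (3 ^ (u + 2) - 1) := by
    intro α hα
    rw [← w1]
    zify
    rw [hwt α 0 hα, hwt 1 0 one_ne_zero]
  have w0 : c 0 0 = 0 := by
    funext x; simp [c]
  have hmem : ∀ α w, c α w ∈ C := fun α w => by rw [hC]; exact ⟨α, w, rfl⟩
  have hCform : ∀ d ∈ C, ∃ α w, d = c α w := fun d hd => by rw [hC] at hd; exact hd
  have hmul : 2 * s * (3 ^ (u + 2) - 1) + 2 * s = 18 * (s * 3 ^ u) := by
    rw [← Nat.mul_succ, Nat.succ_eq_add_one, Nat.sub_add_cancel hq1, e1]; ring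
  have hpos : 0 < 2 * s * (3 ^ (u + 2) - 1) := by
    apply Nat.mul_pos (by omega)
    have : 1 ≤ 3 ^ u := Nat.one_le_pow _ _ (by norm_num)
    omega
  refine ⟨⟨⟨c 1 0, hmem _ _, ?_, w1⟩, ?_⟩, ⟨?_, ?_⟩, ?_⟩
  · intro h
    rw [h, hammingNorm_zero] at w1
    omega
  · rintro m ⟨d, hd, hd0, rfl⟩
    obtain ⟨α, w, rfl⟩ := hCform d hd
    by_cases hw : w = 0
    · subst hw
      by_cases hα : α = 0
      · subst hα; exact absurd w0 hd0
      · exact (w1' α hα).ge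
    · by_cases hα : α = 0
      · subst hα; rw [w2 w hw, e2]; omega
      · have h := w3 α w hα hw
        rw [e2] at h
        omega
  · have hlt : W ⟨0, by omega⟩ < ⊤ := by
      rw [lt_top_iff_ne_top]
      intro h
      have h1 := hdim ⟨0, by omega⟩
      rw [h, finrank_top, Module.finrank_fin_fun] at h1
      omega
    obtain ⟨φ, hφ, hle⟩ := Submodule.exists_le_ker_of_lt_top _ hlt
    obtain ⟨w, rfl⟩ := (dotProductEquiv (ZMod 3) (Fin n)).surjective φ
    have hw : w ≠ 0 := by rintro rfl; exact hφ (map_zero _)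
    refine ⟨c 1 w, hmem _ _, ?_⟩
    have h := w3 1 w one_ne_zero hw
    have h1 : #{k | W k ≤ LinearMap.ker (L w)} = 1 := by
      apply le_antisymm (hm w hw)
      rw [Nat.one_le_iff_ne_zero, Finset.card_ne_zero]
      exact ⟨⟨0, by omega⟩, by simpa using hle⟩
    rw [h1] at h
    omega
  · rintro m ⟨d, hd, rfl⟩
    obtain ⟨α, w, rfl⟩ := hCform d hd
    by_cases hw : w = 0
    · subst hw
      by_cases hα : α = 0
      · subst hα; rw [w0, hammingNorm_zero]; exact Nat.zero_le _
      · rw [w1' α hα]; omega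
    · by_cases hα : α = 0
      · subst hα; rw [w2 w hw]; omega
      · have h := w3 α w hα hw
        have h1 := Nat.mul_le_mul_left (3 ^ (u + 2)) (hm w hw)
        omega
  · omega
end

section
/- Let n = 2t be an even integer with n ≥ 6, let s be an integer with 2 ≤ s ≤ 3^t − 1 (i.e. s ∉ {1, 3^t, 3^t + 1}), and let W_1, …, W_s be pairwise disjoint t-dimensional F_3-linear subspaces of F_3^n. Then the linear code C_f associated to the characteristic function f is a minimal linear code of length 3^n − 1: for every codeword c ∈ C_f with c ≠ 0 and every codeword c' ∈ C_f whose support is contained in the support of c, there exists λ ∈ F_3 with c' = λ·c. -/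
open Matrix Finset

theorem fiber_card {V : Type} [AddCommGroup V] [Module (ZMod 3) V] [Fintype V] [DecidableEq V]
    (l : V →ₗ[ZMod 3] ZMod 3) (hl : l ≠ 0) :
    3 * (univ.filter (fun x => l x = 1)).card = 3 ^ Module.finrank (ZMod 3) V := by
  have hs : Function.Surjective l := LinearMap.surjective hl
  have hr : ∀ c : ZMod 3, c ∈ Set.range l.toAddMonoidHom := fun c => hs c
  have h1 : Fintype.card V = ∑ c : ZMod 3, (univ.filter (fun x => l x = c)).card := by
    rw [← Finset.card_univ]
    exact Finset.card_eq_sum_card_fiberwise (fun x _ => by simp)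
  have h2 : ∀ c : ZMod 3, (univ.filter (fun x => l x = c)).card
      = (univ.filter (fun x => l x = 1)).card := fun c =>
    AddMonoidHom.card_fiber_eq_of_mem_range l.toAddMonoidHom (hr c) (hr 1)
  rw [Finset.sum_congr rfl (fun c _ => h2 c)] at h1
  have h3 := Module.card_eq_pow_finrank (K := ZMod 3) (V := V)
  simp [ZMod.card] at h1 h3
  omega

theorem fiber_card_le {V : Type} [AddCommGroup V] [Module (ZMod 3) V] [Fintype V] [DecidableEq V]
    (l : V →ₗ[ZMod 3] ZMod 3) :
    3 * (univ.filter (fun x => l x = 1)).card ≤ 3 ^ Module.finrank (ZMod 3) V := by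
  by_cases hl : l = 0
  · subst hl; simp
  · exact (fiber_card l hl).le

theorem exists_val_one {V : Type} [AddCommGroup V] [Module (ZMod 3) V]
    (U : Submodule (ZMod 3) V) (a l : V →ₗ[ZMod 3] ZMod 3)
    (h : ∀ x ∈ U, a x = 1 → l x = 0) (hU : ∃ x ∈ U, a x ≠ 0) : ∀ x ∈ U, l x = 0 := by
  obtain ⟨x1, hx1, hax1⟩ := hU
  obtain ⟨x0, hx0, ha0⟩ : ∃ x ∈ U, a x = 1 :=
    ⟨(a x1)⁻¹ • x1, U.smul_mem _ hx1, by simp [hax1]⟩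
  have h0 := h x0 hx0 ha0
  intro x hx
  have := h (x + (1 - a x) • x0) (U.add_mem hx (U.smul_mem _ hx0)) (by simp [ha0])
  simpa [h0] using this

theorem exists_ker {V : Type} [AddCommGroup V] [Module (ZMod 3) V] [FiniteDimensional (ZMod 3) V]
    (U : Submodule (ZMod 3) V) (a : V →ₗ[ZMod 3] ZMod 3)
    (h : 2 ≤ Module.finrank (ZMod 3) U) : ∃ y ∈ U, y ≠ 0 ∧ a y = 0 := by
  have := LinearMap.ker_ne_bot_of_finrank_lt (f := a.domRestrict U) (by simp; omega)
  obtain ⟨y, hy, hy0⟩ := Submodule.exists_mem_ne_zero_of_ne_bot this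
  exact ⟨y, y.2, by simpa using hy0, by simpa using hy⟩

theorem core (t n s : ℕ) (ht : n = 2 * t) (hn : 6 ≤ n) (hs : 2 ≤ s)
    (hs2 : s ≤ 3 ^ t - 1)
    (W : Fin s → Submodule (ZMod 3) (Fin n → ZMod 3))
    (hdim : ∀ k, Module.finrank (ZMod 3) (W k) = t)
    (hdisj : ∀ i j, i ≠ j → W i ⊓ W j = ⊥)
    (f : (Fin n → ZMod 3) → ZMod 3)
    (hf1 : ∀ (x : Fin n → ZMod 3) (k : Fin s), x ≠ 0 → x ∈ W k → f x = 1)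
    (hf0 : ∀ x : Fin n → ZMod 3, (x = 0 ∨ ∀ k, x ∉ W k) → f x = 0)
    (a l : (Fin n → ZMod 3) →ₗ[ZMod 3] ZMod 3)
    (h : ∀ x, f x = a x → l x = 0) : l = 0 := by
  classical
  have htop : ∀ i j, i ≠ j → ∀ g : (Fin n → ZMod 3) →ₗ[ZMod 3] ZMod 3,
      (∀ x ∈ W i, g x = 0) → (∀ x ∈ W j, g x = 0) → g = 0 := by
    intro i j hij g hi hj
    have h1 : W i ⊔ W j = ⊤ := Submodule.eq_top_of_disjoint _ _
      (by simp [hdim]; omega) (disjoint_iff.2 (hdisj i j hij))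
    have h2 : W i ⊔ W j ≤ LinearMap.ker g := sup_le hi hj
    rw [h1] at h2
    exact LinearMap.ker_eq_top.1 (top_le_iff.1 h2)
  by_cases ha : a = 0
  · by_contra hl
    have hcov : ∀ x, l x = 1 → ∃ k, x ∈ W k := by
      intro x hx
      by_contra hk
      push Not at hk
      have := h x (by simp [ha, hf0 x (Or.inr hk)])
      rw [this] at hx
      exact absurd hx (by decide)
    have h1 := fiber_card l hl
    have h2 : (univ.filter (fun x => l x = 1)) ⊆
        univ.biUnion (fun k : Fin s =>
          (univ.filter (fun x : W k => l.domRestrict (W k) x = 1)).image Subtype.val) := by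
      intro x hx
      obtain ⟨k, hk⟩ := hcov x (by simpa using hx)
      have hx1 : l x = 1 := by simpa using hx
      exact Finset.mem_biUnion.2 ⟨k, Finset.mem_univ _, Finset.mem_image.2
        ⟨⟨x, hk⟩, Finset.mem_filter.2 ⟨Finset.mem_univ _, hx1⟩, rfl⟩⟩
    have h3 := (Finset.card_le_card h2).trans Finset.card_biUnion_le
    have h4 : ∀ k : Fin s, 3 * ((univ.filter
        (fun x : W k => l.domRestrict (W k) x = 1)).image Subtype.val).card ≤ 3 ^ t := by
      intro k
      have := fiber_card_le (l.domRestrict (W k))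
      rw [hdim k] at this
      exact (Nat.mul_le_mul_left 3 Finset.card_image_le).trans this
    have h5 : 3 ^ n ≤ s * 3 ^ t := by
      calc 3 ^ n = 3 * (univ.filter (fun x => l x = 1)).card := by rw [h1]; simp
        _ ≤ _ := Nat.mul_le_mul_left 3 h3
        _ ≤ ∑ k : Fin s, 3 ^ t := by rw [Finset.mul_sum]; exact Finset.sum_le_sum fun k _ => h4 k
        _ = _ := by simp
    have h6 : 0 < 3 ^ t := by positivity
    have h7 : s < 3 ^ t := by omega
    have h8 : s * 3 ^ t < 3 ^ t * 3 ^ t := Nat.mul_lt_mul_of_pos_right h7 h6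
    rw [ht, two_mul, pow_add] at h5
    omega
  · have hA : ∀ k, (∃ x ∈ W k, a x ≠ 0) → ∀ x ∈ W k, l x = 0 := by
      intro k hk
      refine exists_val_one (W k) a l (fun x hx hax => ?_) hk
      refine h x ?_
      rw [hax]
      refine hf1 x k ?_ hx
      rintro rfl
      simp at hax
    by_cases hB : ∃ i, ∀ x ∈ W i, a x = 0
    · obtain ⟨i, hi⟩ := hB
      have hC : ∀ k, k ≠ i → ∀ x ∈ W k, l x = 0 := by
        intro k hk
        apply hA
        by_contra hc
        push Not at hc
        exact ha (htop k i hk a hc hi)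
      obtain ⟨j, hj⟩ : ∃ j, j ≠ i := by
        have : Nontrivial (Fin s) := Fin.nontrivial_iff_two_le.2 hs
        exact exists_ne i
      refine htop j i hj l (hC j hj) ?_
      intro x hx
      obtain ⟨y, hy, hy0, hay⟩ := exists_ker (W j) a (by rw [hdim]; omega)
      have hly := hC j hj y hy
      have hxy : l (x + y) = 0 := by
        by_cases hk : ∃ k, x + y ∈ W k
        · obtain ⟨k, hk⟩ := hk
          refine hC k ?_ _ hk
          rintro rfl
          have : y ∈ W j ⊓ W k := ⟨hy, by simpa using (W k).sub_mem hk hx⟩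
          rw [hdisj j k hj] at this
          exact hy0 (by simpa using this)
        · push Not at hk
          apply h
          rw [hf0 _ (Or.inr hk), map_add, hi x hx, hay, add_zero]
      simpa [hly] using hxy
    · push Not at hB
      exact htop ⟨0, by omega⟩ ⟨1, by omega⟩ (by simp) l (hA _ (hB _)) (hA _ (hB _))

theorem stmt2 (t n s : ℕ) (ht : n = 2 * t) (hn : 6 ≤ n) (hs : 2 ≤ s)
    (hs2 : s ≤ 3 ^ t - 1)
    (W : Fin s → Submodule (ZMod 3) (Fin n → ZMod 3))
    (hdim : ∀ k, Module.finrank (ZMod 3) (W k) = t)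
    (hdisj : ∀ i j, i ≠ j → W i ⊓ W j = ⊥)
    (f : (Fin n → ZMod 3) → ZMod 3)
    (hf1 : ∀ (x : Fin n → ZMod 3) (k : Fin s), x ≠ 0 → x ∈ W k → f x = 1)
    (hf0 : ∀ x : Fin n → ZMod 3, (x = 0 ∨ ∀ k, x ∉ W k) → f x = 0)
    (C : Set ({x : Fin n → ZMod 3 // x ≠ 0} → ZMod 3))
    (hC : C = {c | ∃ (α : ZMod 3) (w : Fin n → ZMod 3),
      c = fun x => α * f x.1 + w ⬝ᵥ x.1})
    :
    ∀ c ∈ C, c ≠ 0 → ∀ c' ∈ C, (∀ i, c' i ≠ 0 → c i ≠ 0) →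
      ∃ lam : ZMod 3, c' = lam • c := by
  subst hC
  rintro c ⟨α, w, rfl⟩ hc c' ⟨β, v, rfl⟩ hsupp
  let D : (Fin n → ZMod 3) → ((Fin n → ZMod 3) →ₗ[ZMod 3] ZMod 3) :=
    fun w => dotProductBilin (ZMod 3) (ZMod 3) w
  have hD : ∀ w x, D w x = w ⬝ᵥ x := fun w x => rfl
  have hz : ∀ x, α * f x + w ⬝ᵥ x = 0 → β * f x + v ⬝ᵥ x = 0 := by
    intro x hx
    by_cases hx0 : x = 0
    · subst hx0; simp [hf0 0 (Or.inl rfl)]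
    · by_contra hne
      exact hsupp ⟨x, hx0⟩ hne hx
  by_cases hα : α = 0
  · subst hα
    simp only [zero_mul, zero_add] at hz hc ⊢
    have hβ : β = 0 := by
      obtain ⟨y, hy, hy0, hay⟩ := exists_ker (W ⟨0, by omega⟩) (D w) (by rw [hdim]; omega)
      rw [hD] at hay
      have h1 := hz y hay
      have h2 := hz (-y) (by simp [hay])
      rw [hf1 y _ hy0 hy] at h1
      rw [hf1 (-y) _ (neg_ne_zero.2 hy0) ((W _).neg_mem hy), dotProduct_neg] at h2
      have key : ∀ b r : ZMod 3, b * 1 + r = 0 → b * 1 + -r = 0 → b = 0 := by decide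
      exact key β _ h1 h2
    subst hβ
    simp only [zero_mul, zero_add] at hz ⊢
    obtain ⟨x0, hx0⟩ : ∃ x0, w ⬝ᵥ x0 ≠ 0 := by
      by_contra hcon
      push Not at hcon
      exact hc (funext fun x => hcon x.1)
    refine ⟨(v ⬝ᵥ x0) * (w ⬝ᵥ x0)⁻¹, ?_⟩
    funext x
    have := hz (x.1 - ((w ⬝ᵥ x.1) * (w ⬝ᵥ x0)⁻¹) • x0) (by
      simp [dotProduct_sub, dotProduct_smul, hx0])
    simp only [dotProduct_sub, dotProduct_smul, smul_eq_mul] at this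
    simp only [Pi.smul_apply, smul_eq_mul]
    linear_combination this
  · refine ⟨β * α⁻¹, ?_⟩
    have hk := core t n s ht hn hs hs2 W hdim hdisj f hf1 hf0
      (-(α⁻¹) • D w) (D v - (β * α⁻¹) • D w) (by
        intro x hx
        simp only [LinearMap.smul_apply, LinearMap.sub_apply, hD, smul_eq_mul] at hx ⊢
        have := hz x (by rw [hx]; field_simp; ring)
        rw [hx] at this
        linear_combination this)
    funext x
    have hx := LinearMap.congr_fun hk x.1
    simp only [LinearMap.smul_apply, LinearMap.sub_apply, hD, smul_eq_mul,
      LinearMap.zero_apply] at hx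
    simp only [Pi.smul_apply, smul_eq_mul]
    have : β * α⁻¹ * α = β := by field_simp
    linear_combination hx - f x.1 * this
end

section
/- Let n = 2t be an even integer with n ≥ 6, let s be an integer with 1 ≤ s ≤ 3^{t−2}, and let W_1, …, W_s be pairwise disjoint t-dimensional F_3-linear subspaces of F_3^n. Then for the code C_f associated to the characteristic function f: the minimum Hamming weight of a nonzero codeword of C_f equals s(3^t − 1), the maximum Hamming weight of a codeword of C_f equals 2·3^{n−1} + 3^t − s, and 3·s(3^t − 1) ≤ 2·3^{n−1} + 3^t − s; in particular wt_min/wt_max ≤ 1/3 < 2/3, so C_f violates the Ashikhmin–Barg sufficient condition for minimality. -/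
open Matrix Finset

/-- indicator of nonvanishing -/
def nzInd (a : ZMod 3) : ℤ := if a = 0 then 0 else 1

lemma nzInd_transl {V : Type*} [AddCommGroup V] [Module (ZMod 3) V] [Fintype V]
    (φ : V →ₗ[ZMod 3] ZMod 3) (v : V) (hv : φ v ≠ 0) (a : ZMod 3) :
    ∑ x, nzInd (a + φ x) = ∑ x, nzInd (φ x) := by
  have h : φ ((a * (φ v)⁻¹) • v) = a := by
    have : Fact (Nat.Prime 3) := ⟨Nat.prime_three⟩
    rw [map_smul, smul_eq_mul, mul_assoc, inv_mul_cancel₀ hv, mul_one]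
  rw [← Equiv.sum_comp (Equiv.addLeft ((a * (φ v)⁻¹) • v)) (fun x => nzInd (φ x))]
  refine Finset.sum_congr rfl fun x _ => ?_
  simp [Equiv.coe_addLeft, map_add, h, -map_smul]

lemma nzInd_count {V : Type*} [AddCommGroup V] [Module (ZMod 3) V] [Fintype V]
    (φ : V →ₗ[ZMod 3] ZMod 3) (v : V) (hv : φ v ≠ 0) :
    3 * ∑ x, nzInd (φ x) = 2 * (Fintype.card V : ℤ) := by
  have h1 := nzInd_transl φ v hv 1
  have h2 := nzInd_transl φ v hv 2
  have h : ∑ x, (nzInd (φ x) + nzInd (1 + φ x) + nzInd (2 + φ x)) = ∑ x : V, (2 : ℤ) := by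
    refine Finset.sum_congr rfl fun x _ => ?_
    generalize φ x = y
    revert y
    decide
  rw [Finset.sum_add_distrib, Finset.sum_add_distrib, h1, h2] at h
  simp at h
  linarith

/-- dot product functional -/
def dotL {n : ℕ} (w : Fin n → ZMod 3) : (Fin n → ZMod 3) →ₗ[ZMod 3] ZMod 3 where
  toFun x := w ⬝ᵥ x
  map_add' x y := dotProduct_add w x y
  map_smul' c x := by simp [dotProduct_smul]

lemma dotL_exists {n : ℕ} (w : Fin n → ZMod 3) (hw : w ≠ 0) : ∃ v, dotL w v ≠ 0 := by
  by_contra! h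
  exact hw (dotProduct_eq_zero w h)

lemma weight_eq_sum {n : ℕ} (f : (Fin n → ZMod 3) → ZMod 3) (hf : f 0 = 0)
    (α : ZMod 3) (w : Fin n → ZMod 3) :
    (hammingNorm (fun x : {x : Fin n → ZMod 3 // x ≠ 0} => α * f x.1 + w ⬝ᵥ x.1) : ℤ)
      = ∑ x, nzInd (α * f x + w ⬝ᵥ x) := by
  classical
  rw [← Finset.sum_erase (a := 0) _ (by simp [hf, nzInd]),
    Finset.sum_subtype (p := fun x => x ≠ 0) _ (by simp)]
  simp only [hammingNorm, nzInd, Finset.card_filter]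
  push_cast
  refine Finset.sum_congr rfl fun x _ => ?_
  by_cases h : α * f x.1 + w ⬝ᵥ x.1 = 0 <;> simp [h]

open Classical in
lemma weight_formula (t n s : ℕ)
    (W : Fin s → Submodule (ZMod 3) (Fin n → ZMod 3))
    (hdim : ∀ k, Module.finrank (ZMod 3) (W k) = t)
    (hdisj : ∀ i j, i ≠ j → W i ⊓ W j = ⊥)
    (f : (Fin n → ZMod 3) → ZMod 3)
    (hf1 : ∀ (x : Fin n → ZMod 3) (k : Fin s), x ≠ 0 → x ∈ W k → f x = 1)
    (hf0 : ∀ x : Fin n → ZMod 3, (x = 0 ∨ ∀ k, x ∉ W k) → f x = 0)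
    (α : ZMod 3) (hα : α ≠ 0) (w : Fin n → ZMod 3) :
    ∑ x, nzInd (α * f x + w ⬝ᵥ x) = ∑ x, nzInd (w ⬝ᵥ x) +
      ((univ.filter fun k => ∀ x ∈ W k, w ⬝ᵥ x = 0).card * 3 ^ t - s : ℤ) := by
  have hpt : ∀ x, nzInd (α * f x + w ⬝ᵥ x) = nzInd (w ⬝ᵥ x) +
      ∑ k, (if x ∈ W k then (nzInd (α + w ⬝ᵥ x) - nzInd (w ⬝ᵥ x) - if x = 0 then 1 else 0)
        else 0) := by
    intro x
    by_cases hx : x = 0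
    · subst hx
      simp [hf0, nzInd, hα]
    by_cases hk : ∃ k, x ∈ W k
    · obtain ⟨k, hk⟩ := hk
      rw [hf1 x k hx hk, Finset.sum_eq_single k]
      · simp [hk, hx]
      · intro j _ hj
        rw [if_neg]
        intro hxj
        have : x ∈ W j ⊓ W k := ⟨hxj, hk⟩
        rw [hdisj j k hj] at this
        exact hx (by simpa using this)
      · simp
    · push Not at hk
      simp [hf0 x (Or.inr hk), hk]
  rw [Finset.sum_congr rfl fun x _ => hpt x, Finset.sum_add_distrib, Finset.sum_comm]
  congr 1
  have hk : ∀ k, ∑ x, (if x ∈ W k then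
      (nzInd (α + w ⬝ᵥ x) - nzInd (w ⬝ᵥ x) - if x = 0 then 1 else 0) else 0)
      = (if ∀ x ∈ W k, w ⬝ᵥ x = 0 then 3 ^ t else 0 : ℤ) - 1 := by
    intro k
    rw [← Finset.sum_filter, Finset.sum_subtype (p := fun x => x ∈ W k) _ (by simp),
      Finset.sum_sub_distrib]
    congr 1
    · split_ifs with h
      · have hc : Fintype.card (W k) = 3 ^ t := by
          have : Fact (Nat.Prime 3) := ⟨Nat.prime_three⟩
          rw [Module.card_eq_pow_finrank (K := ZMod 3), hdim, ZMod.card]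
        have : ∀ x : W k, nzInd (α + w ⬝ᵥ x.1) - nzInd (w ⬝ᵥ x.1) = 1 := by
          intro x
          rw [h x.1 x.2]
          simp [nzInd, hα]
        rw [Finset.sum_congr rfl fun x _ => this x]
        rw [Finset.sum_const, Finset.card_univ]
        have hc' : (Fintype.card {x // x ∈ W k}) = 3 ^ t := by convert hc
        simp [hc']
      · push Not at h
        obtain ⟨v, hv, hv0⟩ := h
        have := nzInd_transl ((dotL w).comp (W k).subtype) ⟨v, hv⟩ hv0 α
        rw [Finset.sum_sub_distrib, sub_eq_zero]
        exact this
    · rw [Finset.sum_eq_single (⟨0, (W k).zero_mem⟩ : W k)]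
      · simp
      · intro b _ hb
        rw [if_neg]
        intro h
        exact hb (Subtype.ext h)
      · simp
  rw [Finset.sum_congr rfl fun k _ => hk k, Finset.sum_sub_distrib, ← Finset.sum_filter]
  simp

theorem stmt3 (t n s : ℕ) (ht : n = 2 * t) (hn : 6 ≤ n) (hs : 1 ≤ s)
    (hs2 : s ≤ 3 ^ (t - 2))
    (W : Fin s → Submodule (ZMod 3) (Fin n → ZMod 3))
    (hdim : ∀ k, Module.finrank (ZMod 3) (W k) = t)
    (hdisj : ∀ i j, i ≠ j → W i ⊓ W j = ⊥)
    (f : (Fin n → ZMod 3) → ZMod 3)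
    (hf1 : ∀ (x : Fin n → ZMod 3) (k : Fin s), x ≠ 0 → x ∈ W k → f x = 1)
    (hf0 : ∀ x : Fin n → ZMod 3, (x = 0 ∨ ∀ k, x ∉ W k) → f x = 0)
    (C : Set ({x : Fin n → ZMod 3 // x ≠ 0} → ZMod 3))
    (hC : C = {c | ∃ (α : ZMod 3) (w : Fin n → ZMod 3),
      c = fun x => α * f x.1 + w ⬝ᵥ x.1})
    :
    IsLeast {m : ℕ | ∃ c ∈ C, c ≠ 0 ∧ hammingNorm c = m} (s * (3 ^ t - 1)) ∧
    IsGreatest {m : ℕ | ∃ c ∈ C, hammingNorm c = m} (2 * 3 ^ (n - 1) + 3 ^ t - s) ∧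
    3 * (s * (3 ^ t - 1)) ≤ 2 * 3 ^ (n - 1) + 3 ^ t - s := by
  classical
  have : Fact (Nat.Prime 3) := ⟨Nat.prime_three⟩
  have hf00 : f 0 = 0 := hf0 0 (Or.inl rfl)
  have hN : ∀ w : Fin n → ZMod 3, w ≠ 0 → ∑ x, nzInd (w ⬝ᵥ x) = 2 * 3 ^ (n - 1) := by
    intro w hw
    obtain ⟨v, hv⟩ := dotL_exists w hw
    have h := nzInd_count (dotL w) v hv
    have h3 : (Fintype.card (Fin n → ZMod 3) : ℤ) = 3 * 3 ^ (n - 1) := by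
      rw [← pow_succ', Nat.sub_add_cancel (by omega)]
      simp
    rw [h3] at h
    have : ∑ x, nzInd (dotL w x) = ∑ x, nzInd (w ⬝ᵥ x) := rfl
    linarith
  -- the weights
  have hW0 : ∀ w : Fin n → ZMod 3, w ≠ 0 →
      (hammingNorm (fun x : {x : Fin n → ZMod 3 // x ≠ 0} => (0 : ZMod 3) * f x.1 + w ⬝ᵥ x.1) : ℤ)
        = 2 * 3 ^ (n - 1) := by
    intro w hw
    rw [weight_eq_sum f hf00, ← hN w hw]
    simp
  have hW1 : ∀ α : ZMod 3, α ≠ 0 →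
      (hammingNorm (fun x : {x : Fin n → ZMod 3 // x ≠ 0} =>
        α * f x.1 + (0 : Fin n → ZMod 3) ⬝ᵥ x.1) : ℤ) = s * 3 ^ t - s := by
    intro α hα
    rw [weight_eq_sum f hf00, weight_formula t n s W hdim hdisj f hf1 hf0 α hα]
    simp [nzInd]
  have hW2 : ∀ α : ZMod 3, α ≠ 0 → ∀ w : Fin n → ZMod 3, w ≠ 0 →
      (hammingNorm (fun x : {x : Fin n → ZMod 3 // x ≠ 0} => α * f x.1 + w ⬝ᵥ x.1) : ℤ)
        = 2 * 3 ^ (n - 1) +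
      ((univ.filter fun k => ∀ x ∈ W k, w ⬝ᵥ x = 0).card * 3 ^ t - s : ℤ) := by
    intro α hα w hw
    rw [weight_eq_sum f hf00, weight_formula t n s W hdim hdisj f hf1 hf0 α hα, hN w hw]
  have hm : ∀ w : Fin n → ZMod 3, w ≠ 0 →
      (univ.filter fun k => ∀ x ∈ W k, w ⬝ᵥ x = 0).card ≤ 1 := by
    intro w hw
    rw [Finset.card_le_one]
    intro i hi j hj
    simp only [Finset.mem_filter, Finset.mem_univ, true_and] at hi hj
    by_contra hij
    have htop : W i ⊔ W j = ⊤ := by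
      apply Submodule.eq_top_of_finrank_eq
      have := Submodule.finrank_sup_add_finrank_inf_eq (W i) (W j)
      rw [hdisj i j hij, hdim, hdim] at this
      simp at this
      simp
      omega
    obtain ⟨v, hv⟩ := dotL_exists w hw
    have hle : W i ⊔ W j ≤ LinearMap.ker (dotL w) := sup_le hi hj
    rw [htop] at hle
    exact hv (hle (Submodule.mem_top))
  have hex : ∃ w : Fin n → ZMod 3, w ≠ 0 ∧
      (univ.filter fun k => ∀ x ∈ W k, w ⬝ᵥ x = 0).card = 1 := by
    have hlt : W ⟨0, hs⟩ < ⊤ := by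
      rw [lt_top_iff_ne_top]
      intro h
      have := hdim ⟨0, hs⟩
      rw [h] at this
      simp at this
      omega
    obtain ⟨g, hg, hgk⟩ := Submodule.exists_le_ker_of_lt_top _ hlt
    have hgw : ∀ x, (fun i => g (Pi.single i 1)) ⬝ᵥ x = g x := by
      intro x
      conv_rhs => rw [LinearMap.pi_apply_eq_sum_univ g x]
      simp only [dotProduct, smul_eq_mul]
      refine Finset.sum_congr rfl fun i _ => ?_
      rw [mul_comm]
      congr 2
      ext j
      simp [Pi.single_apply, eq_comm]
    have hw0 : (fun i => g (Pi.single i 1)) ≠ 0 := by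
      intro h
      apply hg
      ext1 x
      ext
      simpa using congrFun h x
    refine ⟨_, hw0, le_antisymm (hm _ hw0) ?_⟩
    rw [Nat.one_le_iff_ne_zero, Finset.card_ne_zero]
    refine ⟨⟨0, hs⟩, ?_⟩
    simp only [Finset.mem_filter, Finset.mem_univ, true_and]
    intro x hx
    rw [hgw]
    exact hgk hx
  -- arithmetic
  obtain ⟨r, rfl⟩ : ∃ r, t = r + 2 := ⟨t - 2, by omega⟩
  have hpow : (3 : ℕ) ^ (n - 1) = 27 * (3 ^ r * 3 ^ r) := by
    have : n - 1 = r + r + 3 := by omega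
    rw [this]; ring
  have hpowt : (3 : ℕ) ^ (r + 2) = 9 * 3 ^ r := by ring
  have hpowZ : (3 : ℤ) ^ (n - 1) = 27 * (3 ^ r * 3 ^ r) := by exact_mod_cast hpow
  have hpowtZ : (3 : ℤ) ^ (r + 2) = 9 * 3 ^ r := by ring
  rw [Nat.add_sub_cancel] at hs2
  have hsZ : (s : ℤ) ≤ 3 ^ r := by exact_mod_cast hs2
  have hs1Z : (1 : ℤ) ≤ s := by exact_mod_cast hs
  have hminZ : ((s * (3 ^ (r + 2) - 1) : ℕ) : ℤ) = s * (9 * 3 ^ r) - s := by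
    rw [Nat.cast_mul, Nat.cast_sub (Nat.one_le_pow _ _ (by norm_num))]
    push_cast; ring
  have hmaxZ : ((2 * 3 ^ (n - 1) + 3 ^ (r + 2) - s : ℕ) : ℤ)
      = 54 * (3 ^ r * 3 ^ r) + 9 * 3 ^ r - s := by
    rw [Nat.cast_sub (by rw [hpowt]; omega)]
    push_cast
    rw [hpowZ, hpowtZ]; ring
  simp only [hpowZ, hpowtZ] at hW0 hW1 hW2
  generalize hA : (3 : ℤ) ^ r = A at *
  have hsA : (s : ℤ) * A ≤ A * A := mul_le_mul_of_nonneg_right hsZ (by linarith)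
  have hA1 : 1 ≤ A := by linarith
  have hsA1 : (1 : ℤ) * A ≤ s * A := mul_le_mul_of_nonneg_right hs1Z (by linarith)
  have hAA : 1 * A ≤ A * A := mul_le_mul_of_nonneg_right hA1 (by linarith)
  have hsss : (1 : ℤ) * s ≤ A * s := mul_le_mul_of_nonneg_right hA1 (by linarith)
  subst hC
  refine ⟨⟨?_, ?_⟩, ⟨?_, ?_⟩, ?_⟩
  · have h := hW1 1 one_ne_zero
    refine ⟨_, ⟨1, 0, rfl⟩, ?_, ?_⟩
    · rw [← hammingNorm_ne_zero_iff]
      zify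
      rw [h]
      nlinarith
    · zify
      rw [h, ← Nat.cast_mul, hminZ]
  · rintro m ⟨c, ⟨α, w, rfl⟩, hc, rfl⟩
    zify
    rw [← Nat.cast_mul, hminZ]
    by_cases hα : α = 0
    · subst hα
      by_cases hw : w = 0
      · subst hw
        exact absurd (by ext x; simp) hc
      · rw [hW0 w hw]; nlinarith
    · by_cases hw : w = 0
      · subst hw
        rw [hW1 α hα]
      · rw [hW2 α hα w hw]
        have : 0 ≤ ((univ.filter fun k => ∀ x ∈ W k, w ⬝ᵥ x = 0).card : ℤ) * (9 * A) := by
          positivity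
        nlinarith
  · obtain ⟨w, hw, hcard⟩ := hex
    refine ⟨_, ⟨1, w, rfl⟩, ?_⟩
    zify
    rw [hW2 1 one_ne_zero w hw, hmaxZ, hcard]
    push_cast; ring
  · rintro m ⟨c, ⟨α, w, rfl⟩, rfl⟩
    zify
    rw [hmaxZ]
    by_cases hα : α = 0
    · subst hα
      by_cases hw : w = 0
      · subst hw
        have : (fun x : {x : Fin n → ZMod 3 // x ≠ 0} =>
          (0 : ZMod 3) * f x.1 + (0 : Fin n → ZMod 3) ⬝ᵥ x.1) = 0 := by ext x; simp
        rw [this, hammingNorm_zero]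
        push_cast
        nlinarith
      · rw [hW0 w hw]; nlinarith
    · by_cases hw : w = 0
      · subst hw
        rw [hW1 α hα]; nlinarith
      · rw [hW2 α hα w hw]
        have h1 : ((univ.filter fun k => ∀ x ∈ W k, w ⬝ᵥ x = 0).card : ℤ) ≤ 1 := by
          exact_mod_cast hm w hw
        have := mul_le_mul_of_nonneg_right h1 (show 0 ≤ 9 * A by linarith)
        linarith
  · have : ((3 * (s * (3 ^ (r + 2) - 1)) : ℕ) : ℤ) ≤
        ((2 * 3 ^ (n - 1) + 3 ^ (r + 2) - s : ℕ) : ℤ) := by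
      rw [hmaxZ, Nat.cast_mul, hminZ]
      push_cast
      nlinarith
    exact_mod_cast this
end

section
/- Let n = 2t be an even positive integer, s ≥ 1 an integer, and W_1, …, W_{2s} pairwise disjoint t-dimensional F_3-linear subspaces of F_3^n, with f the associated ternary partial-spread function. Then the real part of the Walsh transform of f satisfies: Re(f̂(0)) = 3^n − 3s(3^t − 1); Re(f̂(w)) = 3s for every w ∈ F_3^n with w ∉ W_k^⊥ for all 1 ≤ k ≤ 2s; and Re(f̂(w)) = 3s − 3^{t+1}/2 for every nonzero w ∈ F_3^n with w ∈ W_k^⊥ for some 1 ≤ k ≤ 2s. -/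
open Matrix Finset

noncomputable def pse (a : ZMod 3) : ℂ := Complex.exp (2 * Real.pi * Complex.I / 3) ^ a.val

theorem pse_prim : IsPrimitiveRoot (Complex.exp (2 * Real.pi * Complex.I / 3)) 3 := by
  simpa using Complex.isPrimitiveRoot_exp 3 (by norm_num)

theorem pse_add (a b : ZMod 3) : pse (a + b) = pse a * pse b := by
  unfold pse
  rw [← pow_add, ZMod.val_add, ← pow_eq_pow_mod _ pse_prim.pow_eq_one]

theorem pse_zero : pse 0 = 1 := by simp [pse]

theorem pse_ne (a : ZMod 3) (ha : a ≠ 0) : pse a ≠ 1 := by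
  intro h
  have h1 := (pse_prim.pow_eq_one_iff_dvd _).1 h
  have h2 := ZMod.val_lt a
  have h3 : a.val ≠ 0 := by simpa using ha
  have := Nat.le_of_dvd (Nat.pos_of_ne_zero h3) h1
  omega

theorem pse_one_re : (pse 1).re = -1 / 2 := by
  have h : pse 1 = Complex.exp (((2 * Real.pi / 3 : ℝ) : ℂ) * Complex.I) := by
    have : (1 : ZMod 3).val = 1 := rfl
    unfold pse
    rw [this, pow_one]
    congr 1
    push_cast
    ring
  rw [h, Complex.exp_ofReal_mul_I_re]
  have : 2 * Real.pi / 3 = Real.pi - Real.pi / 3 := by ring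
  rw [this, Real.cos_pi_sub, Real.cos_pi_div_three]
  norm_num

theorem pse_sum : 1 + pse 1 + pse 2 = 0 := by
  have h := pse_prim.geom_sum_eq_zero (by norm_num)
  have h1 : (1 : ZMod 3).val = 1 := rfl
  have h2 : (2 : ZMod 3).val = 2 := rfl
  simpa [Finset.sum_range_succ, pse, h1, h2] using h

theorem pse_two_re : (pse 2).re = -1 / 2 := by
  have h := congrArg Complex.re pse_sum
  simp only [Complex.add_re, Complex.one_re, Complex.zero_re, pse_one_re] at h
  linarith

open Classical in
theorem pse_sub_sum {n : ℕ} (V : Submodule (ZMod 3) (Fin n → ZMod 3)) (w : Fin n → ZMod 3) :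
    (∑ x : Fin n → ZMod 3, if x ∈ V then pse (-(w ⬝ᵥ x)) else 0) =
      if ∀ x ∈ V, w ⬝ᵥ x = 0 then (((3 : ℝ) ^ Module.finrank (ZMod 3) V : ℝ) : ℂ) else 0 := by
  split_ifs with h
  · have h1 : (∑ x : Fin n → ZMod 3, if x ∈ V then pse (-(w ⬝ᵥ x)) else 0) =
        ∑ x : Fin n → ZMod 3, if x ∈ V then (1 : ℂ) else 0 := by
      refine Finset.sum_congr rfl fun x _ => ?_
      split_ifs with hx
      · rw [h x hx, neg_zero, pse_zero]
      · rfl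
    rw [h1, Finset.sum_boole]
    have hc : Fintype.card V = 3 ^ Module.finrank (ZMod 3) V := by
      have := Module.card_eq_pow_finrank (K := ZMod 3) (V := V)
      simpa using this
    rw [← Fintype.card_subtype]
    have : Fintype.card {x // x ∈ V} = 3 ^ Module.finrank (ZMod 3) V := hc
    rw [this]
    push_cast
    rfl
  · push Not at h
    obtain ⟨y, hy, hne⟩ := h
    set S := (∑ x : Fin n → ZMod 3, if x ∈ V then pse (-(w ⬝ᵥ x)) else 0) with hS
    have key : S = pse (-(w ⬝ᵥ y)) * S := by
      rw [hS, Finset.mul_sum, ← Equiv.sum_comp (Equiv.addRight y)]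
      refine Finset.sum_congr rfl fun x _ => ?_
      have hm : x + y ∈ V ↔ x ∈ V := V.add_mem_iff_left hy
      simp only [Equiv.coe_addRight, hm]
      split_ifs
      · rw [dotProduct_add, ← pse_add]
        congr 1
        ring
      · simp
    have h2 : (pse (-(w ⬝ᵥ y)) - 1) * S = 0 := by linear_combination -key
    rcases mul_eq_zero.1 h2 with h3 | h3
    · exact absurd (sub_eq_zero.1 h3) (pse_ne _ (neg_ne_zero.2 hne))
    · exact h3

theorem stmt4 (t n s : ℕ) (ht : n = 2 * t) (ht1 : 1 ≤ t) (hs : 1 ≤ s)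
    (W : Fin (2 * s) → Submodule (ZMod 3) (Fin n → ZMod 3))
    (hdim : ∀ k, Module.finrank (ZMod 3) (W k) = t)
    (hdisj : ∀ i j, i ≠ j → W i ⊓ W j = ⊥)
    (f : (Fin n → ZMod 3) → ZMod 3)
    (hf1 : ∀ (x : Fin n → ZMod 3) (k : Fin (2 * s)), x ≠ 0 → x ∈ W k → (k : ℕ) < s → f x = 1)
    (hf2 : ∀ (x : Fin n → ZMod 3) (k : Fin (2 * s)), x ≠ 0 → x ∈ W k → s ≤ (k : ℕ) → f x = 2)
    (hf0 : ∀ x : Fin n → ZMod 3, (x = 0 ∨ ∀ k, x ∉ W k) → f x = 0)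
    (walsh : (Fin n → ZMod 3) → ℂ)
    (hwalsh : ∀ w : Fin n → ZMod 3, walsh w = ∑ x : Fin n → ZMod 3,
      Complex.exp (2 * Real.pi * Complex.I / 3) ^ ((f x - w ⬝ᵥ x).val))
    :
    (walsh 0).re = 3 ^ n - 3 * (s : ℝ) * (3 ^ t - 1) ∧
    (∀ w : Fin n → ZMod 3, (∀ k, ∃ x ∈ W k, w ⬝ᵥ x ≠ 0) → (walsh w).re = 3 * (s : ℝ)) ∧
    (∀ w : Fin n → ZMod 3, w ≠ 0 → (∃ k, ∀ x ∈ W k, w ⬝ᵥ x = 0) →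
      (walsh w).re = 3 * (s : ℝ) - 3 ^ (t + 1) / 2) := by
  classical
  set c : Fin (2 * s) → ZMod 3 := fun k => if (k : ℕ) < s then 1 else 2 with hc
  have hcre : ∀ k, (pse (c k) - 1).re = -3 / 2 := by
    intro k
    simp only [hc, Complex.sub_re, Complex.one_re]
    split_ifs
    · rw [pse_one_re]; norm_num
    · rw [pse_two_re]; norm_num
  have hfc : ∀ x k, x ≠ 0 → x ∈ W k → f x = c k := by
    intro x k hx hk
    simp only [hc]
    split_ifs with h
    · exact hf1 x k hx hk h
    · exact hf2 x k hx hk (not_lt.1 h)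
  have huniq : ∀ x i j, x ≠ 0 → x ∈ W i → x ∈ W j → i = j := by
    intro x i j hx hi hj
    by_contra hij
    have : x ∈ W i ⊓ W j := ⟨hi, hj⟩
    rw [hdisj i j hij] at this
    exact hx (by simpa using this)
  have hpt : ∀ x, pse (f x) = 1 + ∑ k, (pse (c k) - 1) *
      ((if x ∈ W k then 1 else 0) - (if x = 0 then 1 else 0)) := by
    intro x
    by_cases hx : x = 0
    · subst hx
      rw [hf0 0 (Or.inl rfl), pse_zero]
      simp
    · by_cases hk : ∃ k, x ∈ W k
      · obtain ⟨k, hk⟩ := hk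
        rw [hfc x k hx hk, Finset.sum_eq_single k]
        · simp [hk, hx]
        · intro j _ hj
          have : x ∉ W j := fun h => hj (huniq x j k hx h hk)
          simp [this, hx]
        · simp
      · push Not at hk
        rw [hf0 x (Or.inr hk), pse_zero]
        simp [hk, hx]
  have hW : ∀ w, walsh w = (∑ x, pse (-(w ⬝ᵥ x))) + ∑ k, (pse (c k) - 1) *
      ((∑ x, if x ∈ W k then pse (-(w ⬝ᵥ x)) else 0) - 1) := by
    intro w
    have h1 : ∀ k, ((∑ x, if x ∈ W k then pse (-(w ⬝ᵥ x)) else 0) - 1 : ℂ) =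
        ∑ x, ((if x ∈ W k then 1 else 0) - (if x = 0 then 1 else 0)) * pse (-(w ⬝ᵥ x)) := by
      intro k
      simp only [sub_mul, Finset.sum_sub_distrib, ite_mul, one_mul, zero_mul]
      simp [pse_zero]
    simp only [h1, Finset.mul_sum]
    rw [Finset.sum_comm, ← Finset.sum_add_distrib, hwalsh]
    refine Finset.sum_congr rfl fun x _ => ?_
    change pse (f x - w ⬝ᵥ x) = _
    rw [sub_eq_add_neg, pse_add, hpt, add_mul, one_mul, Finset.sum_mul]
    simp only [mul_assoc]
  have hfull : ∀ w : Fin n → ZMod 3, (∑ x, pse (-(w ⬝ᵥ x))) =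
      if w = 0 then (((3 : ℝ) ^ n : ℝ) : ℂ) else 0 := by
    intro w
    have h := pse_sub_sum (⊤ : Submodule (ZMod 3) (Fin n → ZMod 3)) w
    have hz : (∀ x, w ⬝ᵥ x = 0) ↔ w = 0 := dotProduct_eq_zero_iff
    simpa [hz] using h
  have hre : ∀ w, (walsh w).re = (if w = 0 then (3 : ℝ) ^ n else 0) + ∑ k, (-3 / 2 : ℝ) *
      ((if ∀ x ∈ W k, w ⬝ᵥ x = 0 then (3 : ℝ) ^ t else 0) - 1) := by
    intro w
    rw [hW, hfull, Complex.add_re, Complex.re_sum]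
    congr 1
    · split_ifs
      · exact Complex.ofReal_re _
      · rfl
    · refine Finset.sum_congr rfl fun k _ => ?_
      rw [pse_sub_sum, hdim]
      have : ((if ∀ x ∈ W k, w ⬝ᵥ x = 0 then (((3 : ℝ) ^ t : ℝ) : ℂ) else 0) - 1 : ℂ) =
          (((if ∀ x ∈ W k, w ⬝ᵥ x = 0 then (3 : ℝ) ^ t else 0) - 1 : ℝ) : ℂ) := by
        split_ifs <;> push_cast <;> rfl
      rw [this, Complex.re_mul_ofReal, hcre]
  refine ⟨?_, ?_, ?_⟩
  · rw [hre]
    simp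
    ring
  · intro w hw
    have hw0 : w ≠ 0 := by
      rintro rfl
      obtain ⟨x, _, hx⟩ := hw ⟨0, by omega⟩
      simp at hx
    have hw' : ∀ k, ¬ ∀ x ∈ W k, w ⬝ᵥ x = 0 := by
      intro k h
      obtain ⟨x, hx, hne⟩ := hw k
      exact hne (h x hx)
    rw [hre]
    simp only [hw0, hw', if_false]
    simp
    ring
  · rintro w hw0 ⟨k, hk⟩
    have hiff : ∀ j, (∀ x ∈ W j, w ⬝ᵥ x = 0) ↔ j = k := by
      intro j
      constructor
      · intro hj
        by_contra hne
        have hsum := Submodule.finrank_sup_add_finrank_inf_eq (W j) (W k)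
        rw [hdisj j k hne, hdim, hdim, finrank_bot] at hsum
        have htop : W j ⊔ W k = ⊤ := by
          apply Submodule.eq_top_of_finrank_eq
          rw [Module.finrank_fin_fun]
          omega
        apply hw0
        refine dotProduct_eq_zero_iff.1 fun x => ?_
        have hx : x ∈ W j ⊔ W k := htop ▸ Submodule.mem_top
        obtain ⟨a, ha, b, hb, rfl⟩ := Submodule.mem_sup.1 hx
        rw [dotProduct_add, hj a ha, hk b hb, add_zero]
      · rintro rfl
        exact hk
    rw [hre]
    simp only [hw0, hiff, if_false, ← Finset.mul_sum, Finset.sum_sub_distrib]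
    simp
    ring
end

section
/- Let n = 2t be an even positive integer, s ≥ 1 an integer, and W_1, …, W_{2s} pairwise disjoint t-dimensional F_3-linear subspaces of F_3^n, with f the associated ternary partial-spread function. Then the Hamming weights of the codewords c_{α,w} of C_f are: wt(c_{0,w}) = 2·3^{n−1} for every w ≠ 0; wt(c_{α,0}) = 2s(3^t − 1) for α ∈ {1, 2}; wt(c_{α,w}) = 2·3^{n−1} − 2s for α ∈ {1, 2} and every w with w ∉ W_k^⊥ for all 1 ≤ k ≤ 2s; and wt(c_{α,w}) = 2·3^{n−1} + 3^t − 2s for α ∈ {1, 2} and every nonzero w with w ∈ W_k^⊥ for some 1 ≤ k ≤ 2s. -/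
open Matrix Finset

theorem aux_cardU {n : ℕ} (U : Submodule (ZMod 3) (Fin n → ZMod 3)) [DecidablePred (· ∈ U)] :
    #{x : Fin n → ZMod 3 | x ∈ U} = 3 ^ Module.finrank (ZMod 3) U := by
  have h := Module.card_eq_pow_finrank (K := ZMod 3) (V := U)
  rw [ZMod.card] at h
  rw [← h, Fintype.card_subtype]

theorem aux_fiber {n : ℕ} (U : Submodule (ZMod 3) (Fin n → ZMod 3)) [DecidablePred (· ∈ U)]
    (w : Fin n → ZMod 3) (hw : ∃ x ∈ U, w ⬝ᵥ x ≠ 0) (b : ZMod 3) :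
    3 * #{x : Fin n → ZMod 3 | x ∈ U ∧ w ⬝ᵥ x = b} = 3 ^ Module.finrank (ZMod 3) U := by
  obtain ⟨x1, hx1, hne⟩ := hw
  obtain ⟨x0, hx0, h1⟩ : ∃ x0 ∈ U, w ⬝ᵥ x0 = 1 := by
    refine ⟨(w ⬝ᵥ x1) • x1, U.smul_mem _ hx1, ?_⟩
    rw [dotProduct_smul, smul_eq_mul]
    revert hne
    generalize w ⬝ᵥ x1 = a
    revert a
    decide
  have key : ∀ c : ZMod 3, #{x : Fin n → ZMod 3 | x ∈ U ∧ w ⬝ᵥ x = c}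
      = #{x : Fin n → ZMod 3 | x ∈ U ∧ w ⬝ᵥ x = b} := by
    intro c
    refine Finset.card_bij (fun x _ => x + (b - c) • x0) ?_ ?_ ?_
    · intro x hx
      simp only [mem_filter, mem_univ, true_and] at hx ⊢
      refine ⟨U.add_mem hx.1 (U.smul_mem _ hx0), ?_⟩
      rw [dotProduct_add, dotProduct_smul, h1, hx.2, smul_eq_mul]; ring
    · intro x _ y _ h
      exact add_right_cancel h
    · intro y hy
      simp only [mem_filter, mem_univ, true_and] at hy
      refine ⟨y - (b - c) • x0, ?_, by simp⟩
      simp only [mem_filter, mem_univ, true_and]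
      refine ⟨U.sub_mem hy.1 (U.smul_mem _ hx0), ?_⟩
      rw [dotProduct_sub, dotProduct_smul, h1, hy.2, smul_eq_mul]; ring
  rw [← aux_cardU U]
  rw [Finset.card_eq_sum_card_fiberwise (s := ({x | x ∈ U} : Finset (Fin n → ZMod 3))) (f := fun x => w ⬝ᵥ x) (t := (Finset.univ : Finset (ZMod 3)))
    (fun x _ => by simp)]
  simp only [Finset.filter_filter]
  rw [Finset.sum_congr rfl (fun c _ => key c)]
  simp [ZMod.card]

theorem aux_nonzero {n : ℕ} (U : Submodule (ZMod 3) (Fin n → ZMod 3)) [DecidablePred (· ∈ U)]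
    (w : Fin n → ZMod 3) (b : ZMod 3) :
    #{x : Fin n → ZMod 3 | x ∈ U ∧ w ⬝ᵥ x = b} + #{x : Fin n → ZMod 3 | x ∈ U ∧ w ⬝ᵥ x ≠ b}
      = 3 ^ Module.finrank (ZMod 3) U := by
  rw [← aux_cardU U, ← Finset.card_filter_add_card_filter_not (s := {x | x ∈ U}) (fun x => w ⬝ᵥ x = b)]
  simp only [Finset.filter_filter]

/-- local defect -/
noncomputable def auxD {n : ℕ} (U : Submodule (ZMod 3) (Fin n → ZMod 3))
    (w : Fin n → ZMod 3) (c : ZMod 3) (x : Fin n → ZMod 3) : ℤ := by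
  classical
  exact (if x ∈ U ∧ x ≠ 0 ∧ c + w ⬝ᵥ x ≠ 0 then 1 else 0) - (if x ∈ U ∧ w ⬝ᵥ x ≠ 0 then 1 else 0)

theorem auxD_sum_zero {n : ℕ} (U : Submodule (ZMod 3) (Fin n → ZMod 3))
    (w : Fin n → ZMod 3) (c : ZMod 3) (hc : c ≠ 0) (hw : ∀ x ∈ U, w ⬝ᵥ x = 0) :
    ∑ x, auxD U w c x = 3 ^ Module.finrank (ZMod 3) U - 1 := by
  classical
  have h : ∀ x, auxD U w c x = (if x ∈ U then 1 else 0) - (if x = 0 then 1 else 0) := by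
    intro x
    unfold auxD
    by_cases hx : x ∈ U
    · by_cases h0 : x = 0
      · simp [h0]
      · simp [hx, h0, hw x hx, hc]
    · have : x ≠ 0 := fun h => hx (h ▸ U.zero_mem)
      simp [hx, this]
  simp_rw [h]
  rw [Finset.sum_sub_distrib, Finset.sum_boole, aux_cardU U]
  simp

theorem auxD_sum_ne {n : ℕ} (U : Submodule (ZMod 3) (Fin n → ZMod 3))
    (w : Fin n → ZMod 3) (c : ZMod 3) (hc : c ≠ 0) (hw : ∃ x ∈ U, w ⬝ᵥ x ≠ 0) :
    ∑ x, auxD U w c x = - 1 := by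
  classical
  have h : ∀ x, auxD U w c x = (if x ∈ U ∧ w ⬝ᵥ x ≠ -c then 1 else 0)
      - (if x ∈ U ∧ w ⬝ᵥ x ≠ 0 then 1 else 0) - (if x = 0 then 1 else 0) := by
    intro x
    unfold auxD
    have e : c + w ⬝ᵥ x ≠ 0 ↔ w ⬝ᵥ x ≠ -c := by
      rw [not_iff_not, add_comm, eq_neg_iff_add_eq_zero]
    simp only [e]
    by_cases h0 : x = 0
    · simp [h0, eq_comm, hc]
    · simp [h0]
  simp_rw [h]
  rw [Finset.sum_sub_distrib, Finset.sum_sub_distrib, Finset.sum_boole, Finset.sum_boole]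
  have a1 := aux_fiber U w hw (-c)
  have a2 := aux_fiber U w hw 0
  have b1 := aux_nonzero U w (-c)
  have b2 := aux_nonzero U w 0
  have e : #{x : Fin n → ZMod 3 | x ∈ U ∧ w ⬝ᵥ x ≠ -c} = #{x : Fin n → ZMod 3 | x ∈ U ∧ w ⬝ᵥ x ≠ 0} := by
    omega
  rw [e]
  simp

theorem aux_total {n : ℕ} (w : Fin n → ZMod 3) (hw : w ≠ 0) :
    #{x : Fin n → ZMod 3 | w ⬝ᵥ x ≠ 0} = 2 * 3 ^ (n - 1) := by
  classical
  have hw' : ∃ x ∈ (⊤ : Submodule (ZMod 3) (Fin n → ZMod 3)), w ⬝ᵥ x ≠ 0 := by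
    by_contra! h
    exact hw (dotProduct_eq_zero w (fun v => h v trivial))
  have a := aux_fiber ⊤ w hw' 0
  have b := aux_nonzero ⊤ w 0
  simp only [Submodule.mem_top, true_and, finrank_top, Module.finrank_fin_fun] at a b
  have hn : n ≠ 0 := by
    rintro rfl
    exact hw (Subsingleton.elim _ _)
  obtain ⟨m, rfl⟩ := Nat.exists_eq_succ_of_ne_zero hn
  have hp : 3 ^ m.succ = 3 ^ m * 3 := pow_succ 3 m
  have hq : 3 ^ (m.succ - 1) = 3 ^ m := rfl
  rw [hp] at a b
  rw [hq]
  omega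

theorem aux_hamming {n : ℕ} (g : (Fin n → ZMod 3) → ZMod 3) (h0 : g 0 = 0) :
    hammingNorm (fun x : {x : Fin n → ZMod 3 // x ≠ 0} => g x.1) = #{x | g x ≠ 0} := by
  unfold hammingNorm
  refine Finset.card_bij (fun x _ => x.1) ?_ ?_ ?_
  · intro x hx
    simpa using hx
  · intro x _ y _ h
    exact Subtype.ext h
  · intro y hy
    simp only [mem_filter, mem_univ, true_and] at hy
    refine ⟨⟨y, fun h => hy (h ▸ h0)⟩, by simpa using hy, rfl⟩

theorem stmt5 (t n s : ℕ) (ht : n = 2 * t) (ht1 : 1 ≤ t) (hs : 1 ≤ s)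
    (W : Fin (2 * s) → Submodule (ZMod 3) (Fin n → ZMod 3))
    (hdim : ∀ k, Module.finrank (ZMod 3) (W k) = t)
    (hdisj : ∀ i j, i ≠ j → W i ⊓ W j = ⊥)
    (f : (Fin n → ZMod 3) → ZMod 3)
    (hf1 : ∀ (x : Fin n → ZMod 3) (k : Fin (2 * s)), x ≠ 0 → x ∈ W k → (k : ℕ) < s → f x = 1)
    (hf2 : ∀ (x : Fin n → ZMod 3) (k : Fin (2 * s)), x ≠ 0 → x ∈ W k → s ≤ (k : ℕ) → f x = 2)
    (hf0 : ∀ x : Fin n → ZMod 3, (x = 0 ∨ ∀ k, x ∉ W k) → f x = 0)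
    :
    ∀ (α : ZMod 3) (w : Fin n → ZMod 3),
      (α = 0 → w ≠ 0 →
        hammingNorm (fun x : {x : Fin n → ZMod 3 // x ≠ 0} => α * f x.1 + w ⬝ᵥ x.1) = 2 * 3 ^ (n - 1)) ∧
      ((α = 1 ∨ α = 2) → w = 0 →
        hammingNorm (fun x : {x : Fin n → ZMod 3 // x ≠ 0} => α * f x.1 + w ⬝ᵥ x.1) = 2 * s * (3 ^ t - 1)) ∧
      ((α = 1 ∨ α = 2) → (∀ k, ∃ x ∈ W k, w ⬝ᵥ x ≠ 0) →
        hammingNorm (fun x : {x : Fin n → ZMod 3 // x ≠ 0} => α * f x.1 + w ⬝ᵥ x.1) = 2 * 3 ^ (n - 1) - 2 * s) ∧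
      ((α = 1 ∨ α = 2) → w ≠ 0 → (∃ k, ∀ x ∈ W k, w ⬝ᵥ x = 0) →
        hammingNorm (fun x : {x : Fin n → ZMod 3 // x ≠ 0} => α * f x.1 + w ⬝ᵥ x.1) = 2 * 3 ^ (n - 1) + 3 ^ t - 2 * s) := by
  classical
  intro α w
  have hmain : α ≠ 0 → (hammingNorm (fun x : {x : Fin n → ZMod 3 // x ≠ 0} => α * f x.1 + w ⬝ᵥ x.1) : ℤ)
      = #{x : Fin n → ZMod 3 | w ⬝ᵥ x ≠ 0}
        + ∑ k : Fin (2 * s), ∑ x, auxD (W k) w (α * (if (k : ℕ) < s then 1 else 2)) x := by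
    intro hα
    rw [aux_hamming (fun x => α * f x + w ⬝ᵥ x) (by simp [hf0 0 (Or.inl rfl)])]
    rw [Finset.sum_comm, ← Finset.sum_boole, ← Finset.sum_boole, ← Finset.sum_add_distrib]
    refine Finset.sum_congr rfl (fun x _ => ?_)
    by_cases h0 : x = 0
    · subst h0
      simp [auxD, hf0 0 (Or.inl rfl)]
    · by_cases hx : ∃ k, x ∈ W k
      · obtain ⟨k, hk⟩ := hx
        have hfx : f x = if (k : ℕ) < s then 1 else 2 := by
          split_ifs with h
          · exact hf1 x k h0 hk h
          · exact hf2 x k h0 hk (not_lt.mp h)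
        rw [Finset.sum_eq_single k]
        · rw [← hfx]
          simp [auxD, hk, h0]
        · intro j _ hj
          have : x ∉ W j := by
            intro h
            have : x ∈ W j ⊓ W k := ⟨h, hk⟩
            rw [hdisj j k hj] at this
            exact h0 ((Submodule.mem_bot _).mp this)
          simp [auxD, this]
        · simp
      · push Not at hx
        simp [auxD, hx, hf0 x (Or.inr hx)]
  have hc : ∀ k : Fin (2 * s), α ≠ 0 → α * (if (k : ℕ) < s then 1 else 2) ≠ 0 := by
    intro k hα
    refine mul_ne_zero hα ?_
    split_ifs <;> decide
  have hα : (α = 1 ∨ α = 2) → α ≠ 0 := by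
    rintro (rfl | rfl) <;> decide
  refine ⟨?_, ?_, ?_, ?_⟩
  · intro h hw
    rw [aux_hamming (fun x => α * f x + w ⬝ᵥ x) (by simp [h])]
    simp only [h, zero_mul, zero_add]
    exact aux_total w hw
  · intro h hw
    have hm := hmain (hα h)
    rw [Finset.sum_congr rfl (fun k _ => auxD_sum_zero (W k) w _ (hc k (hα h))
      (fun x _ => by simp [hw]))] at hm
    simp only [hdim, hw, zero_dotProduct, ne_eq, not_true_eq_false, Finset.filter_false,
      Finset.card_empty, Finset.sum_const, Finset.card_univ, Fintype.card_fin, nsmul_eq_mul] at hm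
    have h3 : 1 ≤ 3 ^ t := Nat.one_le_pow _ _ (by norm_num)
    zify [h3]
    simp only [hw, zero_dotProduct]
    rw [hm]
    push_cast
    ring
  · intro h hw
    have hw0 : w ≠ 0 := by
      rintro rfl
      obtain ⟨x, _, hx⟩ := hw ⟨0, by omega⟩
      simp at hx
    have hm := hmain (hα h)
    rw [Finset.sum_congr rfl (fun k _ => auxD_sum_ne (W k) w _ (hc k (hα h)) (hw k)),
      aux_total w hw0] at hm
    simp only [Finset.sum_const, Finset.card_univ, Fintype.card_fin, nsmul_eq_mul] at hm
    push_cast at hm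
    apply Nat.eq_sub_of_add_eq
    zify
    linarith
  · rintro h hw ⟨k, hk⟩
    have hm := hmain (hα h)
    have hother : ∀ j, j ≠ k → ∃ x ∈ W j, w ⬝ᵥ x ≠ 0 := by
      intro j hj
      by_contra! hcon
      have hd := Submodule.finrank_sup_add_finrank_inf_eq (W j) (W k)
      rw [hdisj j k hj, hdim, hdim, finrank_bot] at hd
      have htop : W j ⊔ W k = ⊤ := by
        apply Submodule.eq_top_of_finrank_eq
        rw [Module.finrank_fin_fun]
        omega
      apply hw
      apply dotProduct_eq_zero
      intro v
      have hv : v ∈ W j ⊔ W k := htop ▸ Submodule.mem_top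
      obtain ⟨y, hy, z, hz, rfl⟩ := Submodule.mem_sup.mp hv
      rw [dotProduct_add, hcon y hy, hk z hz, add_zero]
    rw [← Finset.add_sum_erase _ _ (Finset.mem_univ k),
      auxD_sum_zero (W k) w _ (hc k (hα h)) hk,
      Finset.sum_congr rfl (fun j hj => auxD_sum_ne (W j) w _ (hc j (hα h))
        (hother j (Finset.ne_of_mem_erase hj))), aux_total w hw, hdim] at hm
    simp only [Finset.sum_const, Finset.card_erase_of_mem (Finset.mem_univ k), Finset.card_univ,
      Fintype.card_fin, nsmul_eq_mul] at hm
    have h2 : 1 ≤ 2 * s := by omega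
    rw [Nat.cast_sub h2] at hm
    push_cast at hm
    apply Nat.eq_sub_of_add_eq
    zify
    linarith
end

section
/- Let n = 2t be an even positive integer, s ≥ 1 an integer, and W_1, …, W_{2s} pairwise disjoint t-dimensional F_3-linear subspaces of F_3^n, with f the associated ternary partial-spread function. Then the F_3-linear map (α, w) ↦ c_{α,w} from F_3 × F_3^n to F_3^{3^n − 1} is injective; consequently C_f is an F_3-linear code of length 3^n − 1 and dimension n + 1, i.e. it has exactly 3^{n+1} codewords. -/
open Matrix Finset

theorem stmt6 (t n s : ℕ) (ht : n = 2 * t) (ht1 : 1 ≤ t) (hs : 1 ≤ s)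
    (W : Fin (2 * s) → Submodule (ZMod 3) (Fin n → ZMod 3))
    (hdim : ∀ k, Module.finrank (ZMod 3) (W k) = t)
    (hdisj : ∀ i j, i ≠ j → W i ⊓ W j = ⊥)
    (f : (Fin n → ZMod 3) → ZMod 3)
    (hf1 : ∀ (x : Fin n → ZMod 3) (k : Fin (2 * s)), x ≠ 0 → x ∈ W k → (k : ℕ) < s → f x = 1)
    (hf2 : ∀ (x : Fin n → ZMod 3) (k : Fin (2 * s)), x ≠ 0 → x ∈ W k → s ≤ (k : ℕ) → f x = 2)
    (hf0 : ∀ x : Fin n → ZMod 3, (x = 0 ∨ ∀ k, x ∉ W k) → f x = 0)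
    (C : Set ({x : Fin n → ZMod 3 // x ≠ 0} → ZMod 3))
    (hC : C = {c | ∃ (α : ZMod 3) (w : Fin n → ZMod 3),
      c = fun x => α * f x.1 + w ⬝ᵥ x.1})
    :
    Function.Injective (fun p : ZMod 3 × (Fin n → ZMod 3) =>
      fun x : {x : Fin n → ZMod 3 // x ≠ 0} => p.1 * f x.1 + p.2 ⬝ᵥ x.1) ∧
    Nat.card C = 3 ^ (n + 1) := by
  have hinj : Function.Injective (fun p : ZMod 3 × (Fin n → ZMod 3) =>
      fun x : {x : Fin n → ZMod 3 // x ≠ 0} => p.1 * f x.1 + p.2 ⬝ᵥ x.1) := by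
    rintro ⟨a, v⟩ ⟨b, w⟩ h
    have h' : ∀ x : Fin n → ZMod 3, x ≠ 0 → a * f x + v ⬝ᵥ x = b * f x + w ⬝ᵥ x :=
      fun x hx => congrFun h ⟨x, hx⟩
    have hk : 0 < 2 * s := by omega
    have hne : W ⟨0, hk⟩ ≠ ⊥ := by
      intro h0
      have h1 := hdim ⟨0, hk⟩
      rw [h0, finrank_bot] at h1
      omega
    obtain ⟨x, hxW, hx0⟩ := Submodule.exists_mem_ne_zero_of_ne_bot hne
    have e1 := h' x hx0
    have e2 := h' (-x) (neg_ne_zero.mpr hx0)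
    rw [hf1 x ⟨0, hk⟩ hx0 hxW (Nat.lt_of_lt_of_le Nat.zero_lt_one hs)] at e1
    rw [hf1 (-x) ⟨0, hk⟩ (neg_ne_zero.mpr hx0) (neg_mem hxW) (Nat.lt_of_lt_of_le Nat.zero_lt_one hs),
      dotProduct_neg, dotProduct_neg] at e2
    have hab : a = b := by
      have key : ∀ a b c d : ZMod 3, a * 1 + c = b * 1 + d → a * 1 + -c = b * 1 + -d → a = b := by
        decide
      exact key _ _ _ _ e1 e2
    subst hab
    have hvw : v = w := by
      funext i
      have := h' (Pi.single i 1) (by simp)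
      simpa using this
    rw [hvw]
  refine ⟨hinj, ?_⟩
  have hCr : C = Set.range (fun p : ZMod 3 × (Fin n → ZMod 3) =>
      fun x : {x : Fin n → ZMod 3 // x ≠ 0} => p.1 * f x.1 + p.2 ⬝ᵥ x.1) := by
    rw [hC]
    ext c
    constructor
    · rintro ⟨a, w, rfl⟩
      exact ⟨(a, w), rfl⟩
    · rintro ⟨⟨a, w⟩, rfl⟩
      exact ⟨a, w, rfl⟩
  rw [hCr, Nat.card_range_of_injective hinj]
  simp [pow_succ, mul_comm]
end

section
/- Let n = 2t be an even integer with n ≥ 6, let s ≥ 1 be an integer with 2s ≠ 3^t + 1, and let W_1, …, W_{2s} be pairwise disjoint t-dimensional F_3-linear subspaces of F_3^n, with f the associated ternary partial-spread function. Then for all pairwise distinct w_1, w_2, w_3 ∈ F_3^n with w_1 + w_2 + w_3 = 0, one has Re(f̂(w_1)) + Re(f̂(w_2)) + Re(f̂(w_3)) ≠ 3^n. -/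
open Matrix Finset

theorem zeta_pow_eq (a : ZMod 3) :
    Complex.exp (2 * Real.pi * Complex.I / 3) ^ a.val = ZMod.stdAddChar (N := 3) a := by
  have h := ZMod.stdAddChar_coe (N := 3) (a.val : ℤ)
  have h2 : (((a.val : ℕ) : ℤ) : ZMod 3) = a := by simp
  rw [h2] at h
  rw [h, ← Complex.exp_nat_mul]
  congr 1
  push_cast
  ring

theorem re_char_sub_one (a : ZMod 3) (ha : a ≠ 0) :
    (ZMod.stdAddChar (N := 3) a - 1 : ℂ).re = -3/2 := by
  have hz : (Complex.exp (2 * Real.pi * Complex.I / 3)).re = -1/2 := by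
    have : (2 * Real.pi * Complex.I / 3 : ℂ) = ((Real.pi - Real.pi / 3 : ℝ) : ℂ) * Complex.I := by
      push_cast; ring
    rw [this, Complex.exp_ofReal_mul_I_re, Real.cos_pi_sub, Real.cos_pi_div_three]
    norm_num
  have h1 : (ZMod.stdAddChar (N := 3) 1 : ℂ).re = -1/2 := by
    rw [← zeta_pow_eq, show (1 : ZMod 3).val = 1 from rfl, pow_one, hz]
  have hs : (∑ x : ZMod 3, ZMod.stdAddChar (N := 3) x : ℂ) = 0 := by
    rw [AddChar.sum_eq_zero_iff_ne_zero]
    intro h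
    have := ZMod.injective_stdAddChar (N := 3) (a₁ := 1) (a₂ := 0) (by rw [h]; simp)
    exact absurd this (by decide)
  have h3 : (∑ x : ZMod 3, ZMod.stdAddChar (N := 3) x : ℂ)
      = ZMod.stdAddChar (N := 3) 0 + ZMod.stdAddChar (N := 3) 1 + ZMod.stdAddChar (N := 3) 2 :=
    Fin.sum_univ_three _
  rw [h3] at hs
  have h4 := congrArg Complex.re hs
  simp only [Complex.add_re, AddChar.map_zero_eq_one, Complex.one_re, Complex.zero_re, h1] at h4
  have : a = 1 ∨ a = 2 := by revert a; decide
  rcases this with rfl | rfl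
  · rw [Complex.sub_re, h1]; norm_num
  · rw [Complex.sub_re, Complex.one_re]; linarith

open Classical in
theorem sum_sub_char {n t : ℕ} (W : Submodule (ZMod 3) (Fin n → ZMod 3))
    (hW : Module.finrank (ZMod 3) W = t) (ψ : AddChar (Fin n → ZMod 3) ℂ) :
    (∑ x, if x ∈ W then ψ x else 0) = if (∀ x ∈ W, ψ x = 1) then (3 ^ t : ℂ) else 0 := by
  let φ : AddChar W ℂ := ψ.compAddMonoidHom W.subtype.toAddMonoidHom
  have h1 : (∑ x, if x ∈ W then ψ x else 0) = ∑ x : W, φ x := by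
    rw [← Finset.sum_filter]
    exact Finset.sum_subtype _ (by simp) _
  have hc : Fintype.card W = 3 ^ t := by
    rw [Module.card_eq_pow_finrank (K := ZMod 3), hW, ZMod.card]
  rw [h1, AddChar.sum_eq_ite, hc]
  have : φ = 0 ↔ ∀ x ∈ W, ψ x = 1 := by
    constructor
    · intro h x hx
      have := DFunLike.congr_fun h ⟨x, hx⟩
      simpa [φ] using this
    · intro h
      ext x
      simpa [φ] using h x x.2
  simp only [this]
  push_cast
  rfl

theorem stmt7 (t n s : ℕ) (ht : n = 2 * t) (hn : 6 ≤ n) (hs : 1 ≤ s)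
    (hs2 : 2 * s ≠ 3 ^ t + 1)
    (W : Fin (2 * s) → Submodule (ZMod 3) (Fin n → ZMod 3))
    (hdim : ∀ k, Module.finrank (ZMod 3) (W k) = t)
    (hdisj : ∀ i j, i ≠ j → W i ⊓ W j = ⊥)
    (f : (Fin n → ZMod 3) → ZMod 3)
    (hf1 : ∀ (x : Fin n → ZMod 3) (k : Fin (2 * s)), x ≠ 0 → x ∈ W k → (k : ℕ) < s → f x = 1)
    (hf2 : ∀ (x : Fin n → ZMod 3) (k : Fin (2 * s)), x ≠ 0 → x ∈ W k → s ≤ (k : ℕ) → f x = 2)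
    (hf0 : ∀ x : Fin n → ZMod 3, (x = 0 ∨ ∀ k, x ∉ W k) → f x = 0)
    (walsh : (Fin n → ZMod 3) → ℂ)
    (hwalsh : ∀ w : Fin n → ZMod 3, walsh w = ∑ x : Fin n → ZMod 3,
      Complex.exp (2 * Real.pi * Complex.I / 3) ^ ((f x - w ⬝ᵥ x).val))
    :
    ∀ w1 w2 w3 : Fin n → ZMod 3, w1 ≠ w2 → w1 ≠ w3 → w2 ≠ w3 → w1 + w2 + w3 = 0 →
      (walsh w1).re + (walsh w2).re + (walsh w3).re ≠ 3 ^ n := by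
  classical
  let e : Fin (2 * s) → ZMod 3 := fun k => if (k : ℕ) < s then 1 else 2
  have he : ∀ k, e k ≠ 0 := by
    intro k; simp only [e]; split_ifs <;> decide
  let c : Fin (2 * s) → ℂ := fun k => ZMod.stdAddChar (N := 3) (e k) - 1
  have hcre : ∀ k, (c k).re = -3/2 := fun k => re_char_sub_one _ (he k)
  have hfe : ∀ x k, x ≠ 0 → x ∈ W k → f x = e k := by
    intro x k hx hk
    simp only [e]
    split_ifs with h
    · exact hf1 x k hx hk h
    · exact hf2 x k hx hk (by omega)
  have hchar : ∀ x, (ZMod.stdAddChar (N := 3) (f x) : ℂ)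
      = 1 + ∑ k, c k * ((if x ∈ W k then 1 else 0) - (if x = 0 then 1 else 0)) := by
    intro x
    by_cases hx : x = 0
    · subst hx
      rw [hf0 0 (Or.inl rfl)]
      simp
    · by_cases hk : ∃ k, x ∈ W k
      · obtain ⟨k, hk⟩ := hk
        rw [Finset.sum_eq_single k]
        · rw [hfe x k hx hk]; simp [hk, hx, c]
        · intro j _ hj
          have : x ∉ W j := by
            intro h
            have h2 : x ∈ W j ⊓ W k := ⟨h, hk⟩
            rw [hdisj j k hj] at h2
            exact hx (by simpa using h2)
          simp [this, hx]
        · simp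
      · push Not at hk
        rw [hf0 x (Or.inr hk)]
        simp [hk, hx]
  let ψ : (Fin n → ZMod 3) → AddChar (Fin n → ZMod 3) ℂ := fun w =>
    { toFun := fun x => ZMod.stdAddChar (N := 3) (-(w ⬝ᵥ x))
      map_zero_eq_one' := by simp
      map_add_eq_mul' := by
        intro x y
        rw [dotProduct_add, neg_add, AddChar.map_add_eq_mul] }
  have hψ : ∀ w x, ψ w x = ZMod.stdAddChar (N := 3) (-(w ⬝ᵥ x)) := fun _ _ => rfl
  let S : (Fin n → ZMod 3) → Fin (2 * s) → ℝ := fun w k =>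
    if (∀ x ∈ W k, ψ w x = 1) then (3 ^ t : ℝ) else 0
  have hS : ∀ w k, (∑ x, if x ∈ W k then ψ w x else 0) = ((S w k : ℝ) : ℂ) := by
    intro w k
    rw [sum_sub_char (W k) (hdim k) (ψ w)]
    simp only [S]
    split_ifs <;> push_cast <;> rfl
  have hS0 : ∀ w k, 0 ≤ S w k := by
    intro w k; simp only [S]; split_ifs <;> positivity
  have hS1 : ∀ k, S 0 k = 3 ^ t := by
    intro k; simp [S, hψ]
  have key : ∀ w, walsh w = (∑ x, ψ w x) + ∑ k, c k * (((S w k - 1 : ℝ)) : ℂ) := by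
    intro w
    rw [hwalsh]
    have : ∀ x, Complex.exp (2 * Real.pi * Complex.I / 3) ^ ((f x - w ⬝ᵥ x).val)
        = ψ w x + ∑ k, c k * ((if x ∈ W k then ψ w x else 0) - (if x = 0 then ψ w x else 0)) := by
      intro x
      rw [zeta_pow_eq, sub_eq_add_neg, AddChar.map_add_eq_mul, hchar, ← hψ, add_mul, one_mul,
        Finset.sum_mul]
      congr 1
      refine Finset.sum_congr rfl fun k _ => ?_
      split_ifs <;> ring
    simp only [this]
    rw [Finset.sum_add_distrib, Finset.sum_comm]
    congr 1
    refine Finset.sum_congr rfl fun k _ => ?_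
    rw [← Finset.mul_sum, Finset.sum_sub_distrib, hS]
    simp
  have hre : ∀ w, (walsh w).re = (∑ x, ψ w x).re + ∑ k, (-3/2) * (S w k - 1) := by
    intro w
    rw [key, Complex.add_re]
    congr 1
    rw [Complex.re_sum]
    refine Finset.sum_congr rfl fun k _ => ?_
    rw [Complex.re_mul_ofReal, hcre]
  have hne : ∀ w, w ≠ 0 → (walsh w).re ≤ 3 * s := by
    intro w hw
    have h0 : (∑ x, ψ w x) = 0 := by
      rw [AddChar.sum_eq_zero_iff_ne_zero]
      intro h
      apply hw
      funext i
      have h1 := DFunLike.congr_fun h (Pi.single i 1)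
      rw [hψ] at h1
      have := ZMod.injective_stdAddChar (N := 3) (a₁ := -(w ⬝ᵥ Pi.single i 1)) (a₂ := 0)
        (by rw [h1]; simp)
      simpa using this
    rw [hre, h0, Complex.zero_re, zero_add]
    calc ∑ k, (-3/2 : ℝ) * (S w k - 1) ≤ ∑ k : Fin (2 * s), (3/2 : ℝ) :=
          Finset.sum_le_sum fun k _ => by linarith [hS0 w k]
      _ = 3 * s := by simp; ring
  have hz : (walsh 0).re = 3 ^ n - 3 * s * (3 ^ t - 1) := by
    have h3 : ((3 : ℂ) ^ n).re = 3 ^ n := by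
      have : ((3 : ℂ) ^ n) = ((3 ^ n : ℝ) : ℂ) := by push_cast; rfl
      rw [this, Complex.ofReal_re]
    rw [hre]
    simp [hS1, hψ, h3]
    ring
  have hlow : -(3 ^ n : ℝ) ≤ (walsh 0).re := by
    have h1 : ‖walsh 0‖ ≤ 3 ^ n := by
      rw [hwalsh]
      refine (norm_sum_le _ _).trans ?_
      simp [zeta_pow_eq]
    have := Complex.abs_re_le_norm (walsh 0)
    exact (abs_le.1 (this.trans h1)).1
  have hq : (27 : ℝ) ≤ 3 ^ t := by
    calc (27 : ℝ) = 3 ^ 3 := by norm_num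
      _ ≤ 3 ^ t := pow_le_pow_right₀ (by norm_num) (by omega)
  have hs' : (1 : ℝ) ≤ s := by exact_mod_cast hs
  have hb : (26 : ℝ) * s ≤ s * (3 ^ t - 1) := by nlinarith
  have hzero : ∀ a b, a ≠ 0 → b ≠ 0 →
      (walsh 0).re + (walsh a).re + (walsh b).re < 3 ^ n := by
    intro a b ha hb'
    have := hne a ha
    have := hne b hb'
    linarith
  intro w1 w2 w3 h12 h13 h23 _
  apply ne_of_lt
  by_cases h1 : w1 = 0
  · subst h1; exact hzero _ _ h12.symm h13.symm
  by_cases h2 : w2 = 0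
  · subst h2; linarith [hzero w1 w3 h1 h23.symm]
  by_cases h3 : w3 = 0
  · subst h3; linarith [hzero w1 w2 h1 h2]
  linarith [hne w1 h1, hne w2 h2, hne w3 h3]
end

section
/- Let n = 2t be an even integer with n ≥ 6, let s ≥ 1 be an integer with 2s ≠ 3^t + 1, and let W_1, …, W_{2s} be pairwise disjoint t-dimensional F_3-linear subspaces of F_3^n, with f the associated ternary partial-spread function. Then for all pairwise distinct w_1, w_2, w_3 ∈ F_3^n with w_1 + w_2 + w_3 = 0, one has Re(f̂(w_1)) + Re(f̂(w_2)) − 2·Re(f̂(w_3)) ≠ 3^n. -/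
open Matrix Finset

lemma aux_sum {n : ℕ} (χ : AddChar (ZMod 3) ℂ) (hχ : ∀ a, χ a = 1 → a = 0)
    (V : Submodule (ZMod 3) (Fin n → ZMod 3)) (w : Fin n → ZMod 3)
    [DecidablePred (· ∈ V)] [Decidable (∀ x ∈ V, w ⬝ᵥ x = 0)] :
    ∑ x : Fin n → ZMod 3, (if x ∈ V then χ (-(w ⬝ᵥ x)) else 0)
      = if (∀ x ∈ V, w ⬝ᵥ x = 0) then (3 : ℂ) ^ Module.finrank (ZMod 3) V else 0 := by
  classical
  let φ : V →+ ZMod 3 :=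
    { toFun := fun x => -(w ⬝ᵥ (x : Fin n → ZMod 3))
      map_zero' := by simp
      map_add' := by
        intro x y
        simp [dotProduct_add]
        ring }
  have h1 : ∑ x : Fin n → ZMod 3, (if x ∈ V then χ (-(w ⬝ᵥ x)) else 0)
      = ∑ x : V, (χ.compAddMonoidHom φ) x := by
    rw [← Finset.sum_filter]
    rw [Finset.sum_subtype (p := fun x => x ∈ V) _ (by simp)]
    rfl
  rw [h1, AddChar.sum_eq_ite]
  have h2 : (χ.compAddMonoidHom φ = 0) ↔ (∀ x ∈ V, w ⬝ᵥ x = 0) := by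
    constructor
    · intro h x hx
      have := DFunLike.congr_fun h ⟨x, hx⟩
      have h3 := hχ _ (by simpa using this)
      simpa [φ] using h3
    · intro h
      ext x
      have := h x x.2
      simp [φ, this]
  have h3 : (Fintype.card V : ℂ) = (3 : ℂ) ^ Module.finrank (ZMod 3) V := by
    rw [Module.card_eq_pow_finrank (K := ZMod 3) (V := V)]
    simp [ZMod.card]
  by_cases h : (∀ x ∈ V, w ⬝ᵥ x = 0)
  · rw [if_pos h, if_pos (h2.2 h), h3]
  · rw [if_neg h, if_neg (fun h' => h (h2.1 h'))]

lemma aux_perp {n t : ℕ} (ht : n = 2 * t) (U V : Submodule (ZMod 3) (Fin n → ZMod 3))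
    (hU : Module.finrank (ZMod 3) U = t) (hV : Module.finrank (ZMod 3) V = t)
    (h : U ⊓ V = ⊥) (w : Fin n → ZMod 3) (h1 : ∀ x ∈ U, w ⬝ᵥ x = 0)
    (h2 : ∀ x ∈ V, w ⬝ᵥ x = 0) : w = 0 := by
  have h3 := Submodule.finrank_sup_add_finrank_inf_eq U V
  rw [h, finrank_bot, hU, hV] at h3
  have h4 : U ⊔ V = ⊤ := by
    apply Submodule.eq_top_of_finrank_eq
    rw [Module.finrank_fin_fun]
    omega
  apply dotProduct_eq_zero
  intro x
  have hx : x ∈ U ⊔ V := by rw [h4]; trivial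
  obtain ⟨u, hu, v, hv, rfl⟩ := Submodule.mem_sup.1 hx
  rw [dotProduct_add, h1 u hu, h2 v hv, add_zero]

lemma aux_re : (Complex.exp (2 * Real.pi * Complex.I / 3)).re = -1/2 ∧
    (Complex.exp (2 * Real.pi * Complex.I / 3) ^ 2).re = -1/2 := by
  have h : IsPrimitiveRoot (Complex.exp (2 * Real.pi * Complex.I / 3)) 3 := by
    simpa using Complex.isPrimitiveRoot_exp 3 (by norm_num)
  have e : (Complex.exp (2 * Real.pi * Complex.I / 3)).re = -1/2 := by
    have : (2 * Real.pi * Complex.I / 3 : ℂ) = ((Real.pi - Real.pi / 3 : ℝ) : ℂ) * Complex.I := by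
      push_cast; ring
    rw [this, Complex.exp_ofReal_mul_I_re, Real.cos_pi_sub, Real.cos_pi_div_three]
    norm_num
  refine ⟨e, ?_⟩
  have := h.geom_sum_eq_zero (by norm_num)
  simp only [Finset.sum_range_succ, Finset.sum_range_zero, pow_zero, pow_one, zero_add] at this
  have := congrArg Complex.re this
  simp only [Complex.add_re, Complex.one_re, Complex.zero_re, e] at this
  linarith

theorem stmt8 (t n s : ℕ) (ht : n = 2 * t) (hn : 6 ≤ n) (hs : 1 ≤ s)
    (hs2 : 2 * s ≠ 3 ^ t + 1)
    (W : Fin (2 * s) → Submodule (ZMod 3) (Fin n → ZMod 3))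
    (hdim : ∀ k, Module.finrank (ZMod 3) (W k) = t)
    (hdisj : ∀ i j, i ≠ j → W i ⊓ W j = ⊥)
    (f : (Fin n → ZMod 3) → ZMod 3)
    (hf1 : ∀ (x : Fin n → ZMod 3) (k : Fin (2 * s)), x ≠ 0 → x ∈ W k → (k : ℕ) < s → f x = 1)
    (hf2 : ∀ (x : Fin n → ZMod 3) (k : Fin (2 * s)), x ≠ 0 → x ∈ W k → s ≤ (k : ℕ) → f x = 2)
    (hf0 : ∀ x : Fin n → ZMod 3, (x = 0 ∨ ∀ k, x ∉ W k) → f x = 0)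
    (walsh : (Fin n → ZMod 3) → ℂ)
    (hwalsh : ∀ w : Fin n → ZMod 3, walsh w = ∑ x : Fin n → ZMod 3,
      Complex.exp (2 * Real.pi * Complex.I / 3) ^ ((f x - w ⬝ᵥ x).val))
    :
    ∀ w1 w2 w3 : Fin n → ZMod 3, w1 ≠ w2 → w1 ≠ w3 → w2 ≠ w3 → w1 + w2 + w3 = 0 →
      (walsh w1).re + (walsh w2).re - 2 * (walsh w3).re ≠ 3 ^ n := by
  classical
  set ζ := Complex.exp (2 * Real.pi * Complex.I / 3) with hζ
  have hprim : IsPrimitiveRoot ζ 3 := by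
    simpa using Complex.isPrimitiveRoot_exp 3 (by norm_num)
  obtain ⟨re1, re2⟩ := aux_re
  rw [← hζ] at re1 re2
  let χ : AddChar (ZMod 3) ℂ := AddChar.zmodChar 3 hprim.pow_eq_one
  have hχa : ∀ a, χ a = ζ ^ a.val := fun a => AddChar.zmodChar_apply _ a
  have hχ : ∀ a, χ a = 1 → a = 0 := by
    intro a ha
    rw [hχa] at ha
    have h1 := (hprim.pow_eq_one_iff_dvd _).1 ha
    have h2 := ZMod.val_lt a
    exact (ZMod.val_eq_zero a).1 (Nat.eq_zero_of_dvd_of_lt h1 h2)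
  let c : Fin (2 * s) → ℂ := fun k => if (k : ℕ) < s then ζ else ζ ^ 2
  have hcre : ∀ k, (c k - 1).re = -3/2 := by
    intro k
    simp only [c]
    split_ifs <;> simp [re1, re2] <;> norm_num
  have hone : (1 : ZMod 3).val = 1 := rfl
  have htwo : (2 : ZMod 3).val = 2 := rfl
  -- decomposition of the exponential of f
  have hdec : ∀ x, χ (f x) = 1 + ∑ k, (c k - 1) *
      ((if x ∈ W k then 1 else 0) - (if x = 0 then 1 else 0)) := by
    intro x
    by_cases hx : x = 0
    · subst hx
      simp [hf0 0 (Or.inl rfl)]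
    · by_cases hk : ∃ k, x ∈ W k
      · obtain ⟨k, hk⟩ := hk
        have huniq : ∀ j, j ≠ k → x ∉ W j := by
          intro j hj hxj
          have : x ∈ W j ⊓ W k := ⟨hxj, hk⟩
          rw [hdisj j k hj] at this
          exact hx (by simpa using this)
        rw [Finset.sum_eq_single k]
        · simp only [hk, hx, if_true, if_false, sub_zero, mul_one, c]
          by_cases hks : (k : ℕ) < s
          · rw [hf1 x k hx hk hks, hχa, hone, if_pos hks]; ring
          · rw [hf2 x k hx hk (not_lt.1 hks), hχa, htwo, if_neg hks]; ring
        · intro j _ hj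
          simp [huniq j hj, hx]
        · simp
      · push Not at hk
        simp [hf0 x (Or.inr hk), hk, hx]
  let P : (Fin n → ZMod 3) → Fin (2 * s) → Prop := fun w k => ∀ x ∈ W k, w ⬝ᵥ x = 0
  let N : (Fin n → ZMod 3) → ℕ := fun w => (Finset.univ.filter (P w)).card
  have hW : ∀ w, walsh w = (if w = 0 then (3 : ℂ) ^ n else 0) +
      ∑ k, (c k - 1) * ((if P w k then (3 : ℂ) ^ t else 0) - 1) := by
    intro w
    have e1 : ∀ x, ζ ^ ((f x - w ⬝ᵥ x).val) =
        (if x ∈ (⊤ : Submodule (ZMod 3) (Fin n → ZMod 3)) then χ (-(w ⬝ᵥ x)) else 0) +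
        ∑ k, (c k - 1) * ((if x ∈ W k then χ (-(w ⬝ᵥ x)) else 0) - (if x = 0 then 1 else 0)) := by
      intro x
      rw [← hχa, sub_eq_add_neg, AddChar.map_add_eq_mul, hdec x, add_mul, Finset.sum_mul]
      congr 1
      · simp
      · apply Finset.sum_congr rfl
        intro k _
        by_cases hx : x = 0
        · subst hx; simp
        · by_cases hxk : x ∈ W k <;> simp [hx, hxk]
    rw [hwalsh w, Finset.sum_congr rfl (fun x _ => e1 x), Finset.sum_add_distrib,
      aux_sum χ hχ ⊤ w, Finset.sum_comm]
    congr 1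
    · have : (∀ x ∈ (⊤ : Submodule (ZMod 3) (Fin n → ZMod 3)), w ⬝ᵥ x = 0) ↔ w = 0 := by
        constructor
        · intro h
          exact dotProduct_eq_zero _ (fun x => h x trivial)
        · rintro rfl x _
          simp
      simp only [this, finrank_top, Module.finrank_fin_fun]
    · apply Finset.sum_congr rfl
      intro k _
      rw [← Finset.mul_sum, Finset.sum_sub_distrib, aux_sum χ hχ (W k) w, hdim k]
      simp [P]
  have hR : ∀ w, (walsh w).re = (if w = 0 then (3 : ℝ) ^ n else 0)
      - 3 / 2 * (3 ^ t * (N w : ℝ) - 2 * s) := by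
    intro w
    have e : ∀ k, ((c k - 1) * ((if P w k then (3 : ℂ) ^ t else 0) - 1)).re
        = -3/2 * ((if P w k then (3 : ℝ) ^ t else 0) - 1) := by
      intro k
      have : ((if P w k then (3 : ℂ) ^ t else 0) - 1)
          = (((if P w k then (3 : ℝ) ^ t else 0) - 1 : ℝ) : ℂ) := by
        split_ifs <;> push_cast <;> rfl
      rw [this, Complex.re_mul_ofReal, hcre]
    have e0 : (if w = 0 then (3 : ℂ) ^ n else 0).re = if w = 0 then (3 : ℝ) ^ n else 0 := by
      have : (if w = 0 then (3 : ℂ) ^ n else 0) = ((if w = 0 then (3 : ℝ) ^ n else 0 : ℝ) : ℂ) := by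
        split_ifs <;> push_cast <;> rfl
      rw [this, Complex.ofReal_re]
    rw [hW w, Complex.add_re, Complex.re_sum, Finset.sum_congr rfl (fun k _ => e k), e0,
      ← Finset.mul_sum, Finset.sum_sub_distrib, ← Finset.sum_filter]
    simp only [Finset.sum_const, nsmul_eq_mul, Finset.card_univ, Fintype.card_fin, N]
    push_cast
    ring
  have hN0 : N 0 = 2 * s := by
    simp [N, P]
  have hN1 : ∀ w, w ≠ 0 → N w ≤ 1 := by
    intro w hw
    apply Finset.card_le_one.2
    intro i hi j hj
    by_contra hij
    exact hw (aux_perp ht (W i) (W j) (hdim i) (hdim j) (hdisj i j hij) w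
      (Finset.mem_filter.1 hi).2 (Finset.mem_filter.1 hj).2)
  have hNneg : ∀ w, N (-w) = N w := by
    intro w
    simp [N, P]
  have hpos : (0 : ℝ) < 3 ^ t := by positivity
  have hpn : (3 : ℝ) ^ n = 3 ^ t * 3 ^ t := by rw [ht, two_mul, pow_add]
  have key : ∀ a b, a ≠ 0 → N b = N a → b ≠ 0 →
      (walsh 0).re + (walsh a).re - 2 * (walsh b).re ≠ 3 ^ n := by
    intro a b ha hab hb h
    rw [hR, hR, hR, if_pos rfl, if_neg ha, if_neg hb, hab, hN0] at h
    push_cast at h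
    have h1 : (3 : ℝ) ^ t * ((N a : ℝ) - 2 * s) = 0 := by linarith
    have h2 : (N a : ℝ) = 2 * s := by
      rcases mul_eq_zero.1 h1 with h | h
      · exact absurd h hpos.ne'
      · linarith
    have h3 : N a = 2 * s := by exact_mod_cast h2
    have := hN1 a ha
    omega
  intro w1 w2 w3 h12 h13 h23 hsum h
  by_cases z1 : w1 = 0
  · subst z1
    have e : w3 = -w2 := by rw [zero_add] at hsum; exact (neg_eq_of_add_eq_zero_right hsum).symm
    exact key w2 w3 h12.symm (by rw [e, hNneg]) h13.symm h
  by_cases z2 : w2 = 0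
  · subst z2
    have e : w3 = -w1 := by rw [add_zero] at hsum; exact (neg_eq_of_add_eq_zero_right hsum).symm
    exact key w1 w3 h12 (by rw [e, hNneg]) h23.symm (by rw [← h]; ring)
  by_cases z3 : w3 = 0
  · subst z3
    have e : w2 = -w1 := by rw [add_zero] at hsum; exact (neg_eq_of_add_eq_zero_right hsum).symm
    have e' : N w2 = N w1 := by rw [e, hNneg]
    rw [hR, hR, hR, if_neg z1, if_neg z2, if_pos rfl, e', hN0, hpn] at h
    push_cast at h
    have h1 : (3 : ℝ) ^ t * (2 * s - N w1 - 3 ^ t) = 0 := by linarith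
    have h2 : (2 * s : ℝ) = 3 ^ t + N w1 := by
      rcases mul_eq_zero.1 h1 with h | h
      · exact absurd h hpos.ne'
      · linarith
    have h3 : 2 * s = 3 ^ t + N w1 := by exact_mod_cast h2
    have h4 := hN1 w1 z1
    have hodd : Odd (3 ^ t) := Odd.pow (by decide)
    obtain ⟨m, hm⟩ := hodd
    omega
  · rw [hR, hR, hR, if_neg z1, if_neg z2, if_neg z3, hpn] at h
    have h1 : (3 : ℝ) ^ t * (2 * 3 ^ t + 3 * (N w1 + N w2 - 2 * N w3)) = 0 := by linarith
    have h2 : (2 * 3 ^ t + 3 * (N w1 + N w2) : ℝ) = 6 * N w3 := by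
      rcases mul_eq_zero.1 h1 with h | h
      · exact absurd h hpos.ne'
      · linarith
    have h3 : 2 * 3 ^ t + 3 * (N w1 + N w2) = 6 * N w3 := by exact_mod_cast h2
    have h4 := hN1 w3 z3
    have h5 : 3 ^ 3 ≤ 3 ^ t := Nat.pow_le_pow_right (by norm_num) (by omega)
    omega
end

section
/- Let n = 2t be an even positive integer, s ≥ 1 an integer, and W_1, …, W_s pairwise disjoint t-dimensional F_3-linear subspaces of F_3^n, with f the associated characteristic function. Then the real part of the Walsh transform of f satisfies: Re(f̂(0)) = 3^n − (3/2)s(3^t − 1); Re(f̂(w)) = (3/2)s for every w ∈ F_3^n with w ∉ W_k^⊥ for all 1 ≤ k ≤ s; and Re(f̂(w)) = (3/2)s − 3^{t+1}/2 for every nonzero w ∈ F_3^n with w ∈ W_k^⊥ for some 1 ≤ k ≤ s. -/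
open Matrix Finset

/-- The additive character `x ↦ ζ^(-w·x)` summed over a subspace on which `w` vanishes. -/
lemma aux_sum_zero {n : ℕ} (χ : AddChar (ZMod 3) ℂ) (V : Submodule (ZMod 3) (Fin n → ZMod 3))
    (w : Fin n → ZMod 3) (h : ∀ x ∈ V, w ⬝ᵥ x = 0) [DecidablePred (· ∈ V)] :
    (∑ x : Fin n → ZMod 3, if x ∈ V then χ (-(w ⬝ᵥ x)) else 0)
      = 3 ^ Module.finrank (ZMod 3) V := by
  have h1 : ∀ x : Fin n → ZMod 3, (if x ∈ V then χ (-(w ⬝ᵥ x)) else 0)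
      = if x ∈ V then (1 : ℂ) else 0 := by
    intro x
    split_ifs with hx
    · simp [h x hx]
    · rfl
  rw [Finset.sum_congr rfl (fun x _ => h1 x), Finset.sum_boole]
  have h2 := Module.card_eq_pow_finrank (K := ZMod 3) (V := V)
  rw [ZMod.card] at h2
  rw [← Fintype.card_subtype]
  have h3 : Fintype.card {x // x ∈ V} = 3 ^ Module.finrank (ZMod 3) V := by
    rw [← h2]
  rw [h3]; push_cast; rfl

lemma aux_sum_ne {n : ℕ} (χ : AddChar (ZMod 3) ℂ) (hχ : ∀ a, a ≠ 0 → χ a ≠ 1)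
    (V : Submodule (ZMod 3) (Fin n → ZMod 3))
    (w : Fin n → ZMod 3) (h : ∃ x ∈ V, w ⬝ᵥ x ≠ 0) [DecidablePred (· ∈ V)] :
    (∑ x : Fin n → ZMod 3, if x ∈ V then χ (-(w ⬝ᵥ x)) else 0) = 0 := by
  obtain ⟨y, hy, hwy⟩ := h
  set S := (∑ x : Fin n → ZMod 3, if x ∈ V then χ (-(w ⬝ᵥ x)) else 0) with hS
  have h1 : S = χ (-(w ⬝ᵥ y)) * S := by
    conv_lhs => rw [hS, ← Equiv.sum_comp (Equiv.addRight y)]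
    rw [hS, Finset.mul_sum]
    refine Finset.sum_congr rfl fun x _ => ?_
    have : (x + y ∈ V) ↔ x ∈ V := V.add_mem_iff_left hy
    simp only [Equiv.coe_addRight, this]
    split_ifs
    · rw [dotProduct_add, neg_add, AddChar.map_add_eq_mul, mul_comm]
    · simp
  have h2 := hχ (-(w ⬝ᵥ y)) (neg_ne_zero.mpr hwy)
  have h3 : (χ (-(w ⬝ᵥ y)) - 1) * S = 0 := by
    rw [sub_mul, ← h1]; ring
  exact (mul_eq_zero.mp h3).resolve_left (sub_ne_zero.mpr h2)

theorem stmt9 (t n s : ℕ) (ht : n = 2 * t) (ht1 : 1 ≤ t) (hs : 1 ≤ s)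
    (W : Fin s → Submodule (ZMod 3) (Fin n → ZMod 3))
    (hdim : ∀ k, Module.finrank (ZMod 3) (W k) = t)
    (hdisj : ∀ i j, i ≠ j → W i ⊓ W j = ⊥)
    (f : (Fin n → ZMod 3) → ZMod 3)
    (hf1 : ∀ (x : Fin n → ZMod 3) (k : Fin s), x ≠ 0 → x ∈ W k → f x = 1)
    (hf0 : ∀ x : Fin n → ZMod 3, (x = 0 ∨ ∀ k, x ∉ W k) → f x = 0)
    (walsh : (Fin n → ZMod 3) → ℂ)
    (hwalsh : ∀ w : Fin n → ZMod 3, walsh w = ∑ x : Fin n → ZMod 3,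
      Complex.exp (2 * Real.pi * Complex.I / 3) ^ ((f x - w ⬝ᵥ x).val))
    :
    (walsh 0).re = 3 ^ n - 3 / 2 * (s : ℝ) * (3 ^ t - 1) ∧
    (∀ w : Fin n → ZMod 3, (∀ k, ∃ x ∈ W k, w ⬝ᵥ x ≠ 0) → (walsh w).re = 3 / 2 * (s : ℝ)) ∧
    (∀ w : Fin n → ZMod 3, w ≠ 0 → (∃ k, ∀ x ∈ W k, w ⬝ᵥ x = 0) →
      (walsh w).re = 3 / 2 * (s : ℝ) - 3 ^ (t + 1) / 2) := by
  classical
  set ζ : ℂ := Complex.exp (2 * Real.pi * Complex.I / 3) with hζ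
  have hprim : IsPrimitiveRoot ζ 3 := by
    have := Complex.isPrimitiveRoot_exp 3 (by norm_num)
    simpa [hζ] using this
  have hre : (ζ - 1).re = -(3 / 2) := by
    have h1 : ζ = Complex.exp (((2 * Real.pi / 3 : ℝ) : ℂ) * Complex.I) := by
      rw [hζ]; congr 1; push_cast; ring
    have h2 : Real.cos (2 * Real.pi / 3) = -(1 / 2) := by
      rw [show 2 * Real.pi / 3 = Real.pi - Real.pi / 3 by ring, Real.cos_pi_sub,
        Real.cos_pi_div_three]
    rw [Complex.sub_re, h1, Complex.exp_ofReal_mul_I_re, h2]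
    norm_num
  let χ : AddChar (ZMod 3) ℂ := AddChar.zmodChar 3 hprim.pow_eq_one
  have hχv : ∀ a, χ a = ζ ^ a.val := fun a => AddChar.zmodChar_apply _ a
  have hχ : ∀ a, a ≠ 0 → χ a ≠ 1 := by
    intro a ha h
    rw [hχv] at h
    have := hprim.dvd_of_pow_eq_one _ h
    have h2 := ZMod.val_lt a
    have h3 : a.val = 0 := Nat.eq_zero_of_dvd_of_lt this h2
    exact ha ((ZMod.val_eq_zero a).mp h3)
  have hχ1 : χ 1 = ζ := by
    rw [hχv, ZMod.val_one, pow_one]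
  let A : Submodule (ZMod 3) (Fin n → ZMod 3) → (Fin n → ZMod 3) → ℂ := fun V w =>
    ∑ x : Fin n → ZMod 3, if x ∈ V then χ (-(w ⬝ᵥ x)) else 0
  have key : ∀ w, walsh w = A ⊤ w + (ζ - 1) * ∑ k, (A (W k) w - 1) := by
    intro w
    have hA : ∀ k, A (W k) w - 1 = ∑ x : Fin n → ZMod 3,
        ((if x ∈ W k then χ (-(w ⬝ᵥ x)) else 0) - if x = 0 then 1 else 0) := by
      intro k
      rw [Finset.sum_sub_distrib]
      simp [A]
    rw [Finset.sum_congr rfl (fun k _ => hA k), Finset.sum_comm, Finset.mul_sum, hwalsh]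
    simp only [A]
    rw [← Finset.sum_add_distrib]
    refine Finset.sum_congr rfl fun x _ => ?_
    rw [← hχv, if_pos Submodule.mem_top]
    by_cases hx : x = 0
    · subst hx
      simp [hf0 0 (Or.inl rfl)]
    · by_cases hk : ∃ k, x ∈ W k
      · obtain ⟨k, hk⟩ := hk
        rw [hf1 x k hx hk, Finset.sum_eq_single k]
        · simp only [hk, hx, if_true, if_false]
          rw [sub_eq_add_neg, AddChar.map_add_eq_mul, hχ1]; ring
        · intro j _ hj
          have : x ∉ W j := by
            intro hxj
            have h0 : x ∈ W j ⊓ W k := ⟨hxj, hk⟩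
            rw [hdisj j k hj] at h0
            exact hx (by simpa using h0)
          simp [this, hx]
        · simp
      · push Not at hk
        rw [hf0 x (Or.inr hk)]
        simp [hk, hx]
  have hA0 : ∀ V w, (∀ x ∈ V, w ⬝ᵥ x = 0) → A V w = 3 ^ Module.finrank (ZMod 3) V :=
    fun V w h => aux_sum_zero χ V w h
  have hA1 : ∀ V w, (∃ x ∈ V, w ⬝ᵥ x ≠ 0) → A V w = 0 :=
    fun V w h => aux_sum_ne χ hχ V w h
  have htop : ∀ w : Fin n → ZMod 3, w ≠ 0 → A ⊤ w = 0 := by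
    intro w hw
    apply hA1
    by_contra! h
    exact hw (dotProduct_eq_zero w fun v => h v Submodule.mem_top)
  have hmul : ∀ r : ℝ, ((ζ - 1) * (r : ℂ)).re = -(3 / 2) * r := by
    intro r
    rw [Complex.re_mul_ofReal, hre]
  refine ⟨?_, ?_, ?_⟩
  · have : walsh 0 = ((3 ^ n : ℝ) : ℂ) + (ζ - 1) * (((s : ℝ) * (3 ^ t - 1) : ℝ) : ℂ) := by
      rw [key, hA0 ⊤ 0 (by simp), finrank_top, Module.finrank_fin_fun]
      rw [Finset.sum_congr rfl (fun k _ => by rw [hA0 (W k) 0 (by simp), hdim k])]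
      simp
      left; ring
    rw [this, Complex.add_re, hmul, Complex.ofReal_re]; ring
  · intro w hw
    have hw0 : w ≠ 0 := by
      rintro rfl
      obtain ⟨x, _, hx⟩ := hw ⟨0, hs⟩
      simp at hx
    have : walsh w = (ζ - 1) * ((-(s : ℝ) : ℝ) : ℂ) := by
      rw [key, htop w hw0, Finset.sum_congr rfl (fun k _ => by rw [hA1 (W k) w (hw k)])]
      simp
    rw [this, hmul]; ring
  · rintro w hw0 ⟨k, hk⟩
    have hother : ∀ j, j ≠ k → A (W j) w = 0 := by
      intro j hj
      apply hA1
      by_contra! h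
      have hsup : W j ⊔ W k = ⊤ := by
        apply Submodule.eq_top_of_finrank_eq
        have := Submodule.finrank_sup_add_finrank_inf_eq (W j) (W k)
        rw [hdisj j k hj, finrank_bot, hdim, hdim] at this
        rw [Module.finrank_fin_fun]; omega
      apply hw0
      refine dotProduct_eq_zero w fun v => ?_
      have hv : v ∈ W j ⊔ W k := by rw [hsup]; exact Submodule.mem_top
      obtain ⟨a, ha, b, hb, rfl⟩ := Submodule.mem_sup.mp hv
      rw [dotProduct_add, h a ha, hk b hb, add_zero]
    have hsum : ∑ j, A (W j) w = 3 ^ t := by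
      rw [Finset.sum_eq_single k (fun j _ hj => hother j hj) (by simp), hA0 _ _ hk, hdim]
    have : walsh w = (ζ - 1) * ((3 ^ t - (s : ℝ) : ℝ) : ℂ) := by
      rw [key, htop w hw0, Finset.sum_sub_distrib, hsum]
      simp
    rw [this, hmul]; ring
end

section
/- Let n = 2t be an even integer with n ≥ 6, let s be an integer with 2 ≤ s ≤ 3^t − 1 (i.e. s ∉ {1, 3^t, 3^t + 1}), and let W_1, …, W_s be pairwise disjoint t-dimensional F_3-linear subspaces of F_3^n, with f the associated characteristic function. Then for all pairwise distinct w_1, w_2, w_3 ∈ F_3^n with w_1 + w_2 + w_3 = 0, one has Re(f̂(w_1)) + Re(f̂(w_2)) + Re(f̂(w_3)) ≠ 3^n. -/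
open Matrix Finset

noncomputable def zet : ℂ := Complex.exp (2 * Real.pi * Complex.I / 3)

lemma zet_prim : IsPrimitiveRoot zet 3 := by
  have := Complex.isPrimitiveRoot_exp 3 (by norm_num)
  simpa [zet] using this

lemma zet_re : zet.re = -1/2 := by
  have h : zet = Complex.exp (((2 * Real.pi / 3 : ℝ) : ℂ) * Complex.I) := by
    unfold zet; congr 1; push_cast; ring
  rw [h, Complex.exp_ofReal_mul_I_re]
  have : 2 * Real.pi / 3 = Real.pi - Real.pi / 3 := by ring
  rw [this, Real.cos_pi_sub, Real.cos_pi_div_three]; norm_num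

noncomputable def ech : AddChar (ZMod 3) ℂ := AddChar.zmodChar 3 zet_prim.pow_eq_one

lemma ech_apply (a : ZMod 3) : ech a = zet ^ a.val := AddChar.zmodChar_apply _ a

lemma ech_one : ech 1 = zet := by
  rw [ech_apply]; simp [ZMod.val_one]

lemma ech_eq_one {a : ZMod 3} (h : ech a = 1) : a = 0 := by
  rw [ech_apply] at h
  have h3 := (zet_prim.pow_eq_one_iff_dvd _).1 h
  have := Nat.eq_zero_of_dvd_of_lt h3 (ZMod.val_lt a)
  exact (ZMod.val_eq_zero a).1 this

noncomputable def psi {n : ℕ} (w : Fin n → ZMod 3) : AddChar (Fin n → ZMod 3) ℂ :=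
  ech.compAddMonoidHom (AddMonoidHom.mk' (fun x => -(w ⬝ᵥ x))
    (by intro a b; rw [dotProduct_add]; ring))

lemma psi_apply {n : ℕ} (w x : Fin n → ZMod 3) : psi w x = ech (-(w ⬝ᵥ x)) := rfl

lemma psi_zero_apply {n : ℕ} (x : Fin n → ZMod 3) : psi 0 x = 1 := by
  simp [psi_apply]

lemma psi_sum {n : ℕ} (w : Fin n → ZMod 3) (hw : w ≠ 0) : ∑ x, psi w x = 0 := by
  classical
  rw [AddChar.sum_eq_ite, if_neg]
  intro h
  apply hw
  funext i
  have h1 : psi w (Pi.single i 1) = 1 := by rw [h]; simp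
  rw [psi_apply] at h1
  simpa using ech_eq_one h1

open Classical in
lemma psi_sum_sub {n : ℕ} (w : Fin n → ZMod 3) (U : Submodule (ZMod 3) (Fin n → ZMod 3)) :
    ∃ m : ℝ, 0 ≤ m ∧ ∑ x, (if x ∈ U then psi w x else 0) = (m : ℂ) := by
  let χ : AddChar U ℂ := (psi w).compAddMonoidHom U.subtype.toAddMonoidHom
  have h : ∑ x, (if x ∈ U then psi w x else 0) = ∑ x : U, χ x := by
    rw [← Finset.sum_filter]
    exact Finset.sum_subtype (p := fun x => x ∈ U) _ (by simp) (fun x => psi w x)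
  rw [h, AddChar.sum_eq_ite]
  split_ifs
  · exact ⟨Fintype.card U, by positivity, by simp⟩
  · exact ⟨0, le_rfl, by simp⟩

open Classical in
lemma psi_sum_sub_zero {n t : ℕ} (U : Submodule (ZMod 3) (Fin n → ZMod 3))
    (hU : Module.finrank (ZMod 3) U = t) :
    ∑ x, (if x ∈ U then psi 0 x else 0) = (3 : ℂ) ^ t := by
  simp only [psi_zero_apply]
  rw [Finset.sum_boole]
  have := Module.card_eq_pow_finrank (K := ZMod 3) (V := U)
  rw [hU, ZMod.card, Fintype.card_subtype] at this
  rw [this]; push_cast; rfl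

theorem stmt11 (t n s : ℕ) (ht : n = 2 * t) (hn : 6 ≤ n) (hs : 2 ≤ s)
    (hs2 : s ≤ 3 ^ t - 1)
    (W : Fin s → Submodule (ZMod 3) (Fin n → ZMod 3))
    (hdim : ∀ k, Module.finrank (ZMod 3) (W k) = t)
    (hdisj : ∀ i j, i ≠ j → W i ⊓ W j = ⊥)
    (f : (Fin n → ZMod 3) → ZMod 3)
    (hf1 : ∀ (x : Fin n → ZMod 3) (k : Fin s), x ≠ 0 → x ∈ W k → f x = 1)
    (hf0 : ∀ x : Fin n → ZMod 3, (x = 0 ∨ ∀ k, x ∉ W k) → f x = 0)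
    (walsh : (Fin n → ZMod 3) → ℂ)
    (hwalsh : ∀ w : Fin n → ZMod 3, walsh w = ∑ x : Fin n → ZMod 3,
      Complex.exp (2 * Real.pi * Complex.I / 3) ^ ((f x - w ⬝ᵥ x).val))
    :
    ∀ w1 w2 w3 : Fin n → ZMod 3, w1 ≠ w2 → w1 ≠ w3 → w2 ≠ w3 → w1 + w2 + w3 = 0 →
      (walsh w1).re + (walsh w2).re + (walsh w3).re ≠ 3 ^ n := by
  classical
  have key : ∀ w, walsh w = ∑ x, psi w x +
      (zet - 1) * (∑ k, ∑ x, (if x ∈ W k then psi w x else 0) - s) := by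
    intro w
    have hpt : ∀ x, zet ^ ((f x - w ⬝ᵥ x).val) = psi w x +
        (zet - 1) * (∑ k, (if x ∈ W k then psi w x else 0) - if x = 0 then (s : ℂ) else 0) := by
      intro x
      rw [← ech_apply, sub_eq_add_neg, AddChar.map_add_eq_mul, ← psi_apply]
      by_cases hx : x = 0
      · subst hx
        rw [hf0 0 (Or.inl rfl)]
        simp
      · rw [if_neg hx]
        by_cases hk : ∃ k, x ∈ W k
        · obtain ⟨k, hk⟩ := hk
          rw [hf1 x k hx hk, ech_one, Finset.sum_eq_single k]
          · rw [if_pos hk]; ring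
          · intro j _ hj
            rw [if_neg]
            intro hxj
            have : x ∈ W j ⊓ W k := ⟨hxj, hk⟩
            rw [hdisj j k hj] at this
            exact hx (by simpa using this)
          · simp
        · push Not at hk
          rw [hf0 x (Or.inr hk)]
          simp [hk]
    rw [hwalsh w]
    change ∑ x, zet ^ ((f x - w ⬝ᵥ x).val) = _
    rw [Finset.sum_congr rfl (fun x _ => hpt x), Finset.sum_add_distrib, ← Finset.mul_sum,
      Finset.sum_sub_distrib, Finset.sum_comm]
    simp
  have hne : ∀ w, w ≠ 0 → ∃ m : ℝ, 0 ≤ m ∧ (walsh w).re = -(3/2) * (m - s) := by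
    intro w hw
    choose m hm hm2 using fun k => psi_sum_sub w (W k)
    refine ⟨∑ k, m k, Finset.sum_nonneg (fun k _ => hm k), ?_⟩
    rw [key w, psi_sum w hw]
    simp only [hm2]
    have : (∑ k, (m k : ℂ) - (s : ℂ)) = ((∑ k, m k - s : ℝ) : ℂ) := by push_cast; rfl
    rw [this, zero_add, Complex.re_mul_ofReal, Complex.sub_re, zet_re, Complex.one_re]
    ring
  have hz : (walsh 0).re = 3 ^ n - 3/2 * (s * 3 ^ t - s) := by
    rw [key 0]
    simp only [fun k => psi_sum_sub_zero (W k) (hdim k)]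
    have h1 : ∑ x : Fin n → ZMod 3, psi 0 x = ((3 ^ n : ℝ) : ℂ) := by
      simp [psi_zero_apply]
    have : (∑ k : Fin s, (3 : ℂ) ^ t - (s : ℂ)) = ((s * 3 ^ t - s : ℝ) : ℂ) := by simp
    rw [this, h1, Complex.add_re, Complex.re_mul_ofReal, Complex.sub_re, zet_re, Complex.one_re,
      Complex.ofReal_re]
    ring
  have ht3 : 3 ≤ t := by omega
  have hT : (27 : ℝ) ≤ 3 ^ t := by
    calc (27 : ℝ) = 3 ^ 3 := by norm_num
      _ ≤ 3 ^ t := pow_le_pow_right₀ (by norm_num) ht3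
  have hN : (3 : ℝ) ^ n = 3 ^ t * 3 ^ t := by rw [ht, two_mul, pow_add]
  have hsT : (s : ℝ) ≤ 3 ^ t := by
    have : s ≤ 3 ^ t := by omega
    exact_mod_cast this
  have hs' : (2 : ℝ) ≤ s := by exact_mod_cast hs
  have zcase : ∀ a b, a ≠ 0 → b ≠ 0 → (walsh 0).re + (walsh a).re + (walsh b).re ≠ 3 ^ n := by
    intro a b ha hb h
    obtain ⟨m, hm, h1⟩ := hne a ha
    obtain ⟨m', hm', h2⟩ := hne b hb
    rw [hz, h1, h2] at h
    nlinarith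
  intro w1 w2 w3 h12 h13 h23 _ h
  by_cases h1 : w1 = 0
  · subst h1
    exact zcase w2 w3 h12.symm h13.symm h
  by_cases h2 : w2 = 0
  · subst h2
    exact zcase w1 w3 h12 h23.symm (by linarith)
  by_cases h3 : w3 = 0
  · subst h3
    exact zcase w1 w2 h13 h23 (by linarith)
  obtain ⟨a, ha, e1⟩ := hne w1 h1
  obtain ⟨b, hb, e2⟩ := hne w2 h2
  obtain ⟨c, hc, e3⟩ := hne w3 h3
  rw [e1, e2, e3, hN] at h
  nlinarith
end

section
/- Let n be a positive integer and let f : F_3^n → F_3 be a function with f(0) = 0 such that f is not equal to any linear form, i.e. for every v ∈ F_3^n there exists x ∈ F_3^n with f(x) ≠ v·x. Then the F_3-linear map (α, w) ↦ c_{α,w} from F_3 × F_3^n to F_3^{3^n − 1} is injective; consequently the code C_f has length 3^n − 1 and dimension n + 1, i.e. exactly 3^{n+1} codewords. -/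
open Matrix Finset

theorem stmt15 (n : ℕ) (hn : 1 ≤ n)
    (f : (Fin n → ZMod 3) → ZMod 3) (hf0 : f 0 = 0)
    (hf : ∀ v : Fin n → ZMod 3, ∃ x, f x ≠ v ⬝ᵥ x)
    (C : Set ({x : Fin n → ZMod 3 // x ≠ 0} → ZMod 3))
    (hC : C = {c | ∃ (α : ZMod 3) (w : Fin n → ZMod 3),
      c = fun x => α * f x.1 + w ⬝ᵥ x.1})
    :
    Function.Injective (fun p : ZMod 3 × (Fin n → ZMod 3) =>
      fun x : {x : Fin n → ZMod 3 // x ≠ 0} => p.1 * f x.1 + p.2 ⬝ᵥ x.1) ∧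
    Nat.card C = 3 ^ (n + 1) := by
  have hinj : Function.Injective (fun p : ZMod 3 × (Fin n → ZMod 3) =>
      fun x : {x : Fin n → ZMod 3 // x ≠ 0} => p.1 * f x.1 + p.2 ⬝ᵥ x.1) := by
    rintro ⟨a, v⟩ ⟨b, w⟩ h
    have key : ∀ x : Fin n → ZMod 3, a * f x + v ⬝ᵥ x = b * f x + w ⬝ᵥ x := by
      intro x
      by_cases hx : x = 0
      · subst hx
        simp [hf0]
      · exact congrFun h ⟨x, hx⟩
    have hab : a = b := by
      by_contra hne
      have hd : a - b ≠ 0 := sub_ne_zero.mpr hne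
      obtain ⟨x, hx⟩ := hf ((a - b)⁻¹ • (w - v))
      apply hx
      rw [smul_dotProduct, sub_dotProduct, smul_eq_mul, eq_inv_mul_iff_mul_eq₀ hd]
      linear_combination key x
    subst hab
    have hvw : v = w := by
      funext i
      have h1 := add_left_cancel (key (Pi.single i 1))
      simpa using h1
    rw [hvw]
  refine ⟨hinj, ?_⟩
  have hr : C = Set.range (fun p : ZMod 3 × (Fin n → ZMod 3) =>
      fun x : {x : Fin n → ZMod 3 // x ≠ 0} => p.1 * f x.1 + p.2 ⬝ᵥ x.1) := by
    rw [hC]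
    ext c
    constructor
    · rintro ⟨a, w, rfl⟩
      exact ⟨(a, w), rfl⟩
    · rintro ⟨⟨a, w⟩, rfl⟩
      exact ⟨a, w, rfl⟩
  rw [hr, Nat.card_range_of_injective hinj]
  simp [Nat.card_prod, ZMod.card, pow_succ, mul_comm]
end

section
/- Let n be a positive integer and let f : F_3^n → F_3 be a function with f(0) = 0 such that for every v ∈ F_3^n there exists x ∈ F_3^n with f(x) ≠ v·x. Then the code C_f is minimal (for every nonzero codeword c ∈ C_f, every codeword c' ∈ C_f with supp(c') ⊆ supp(c) is a scalar multiple λ·c, λ ∈ F_3) if and only if for all pairwise distinct w_1, w_2, w_3 ∈ F_3^n with w_1 + w_2 + w_3 = 0 one has both Re(f̂(w_1)) + Re(f̂(w_2)) + Re(f̂(w_3)) ≠ 3^n and Re(f̂(w_1)) + Re(f̂(w_2)) − 2·Re(f̂(w_3)) ≠ 3^n. -/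
open Matrix Finset

noncomputable def rr (a : ZMod 3) : ℝ := if a = 0 then 1 else -1/2

lemma re_pow (a : ZMod 3) : (Complex.exp (2 * Real.pi * Complex.I / 3) ^ a.val).re = rr a := by
  have h0 : (2 * Real.pi * Complex.I / 3 : ℂ) = ((2 * Real.pi / 3 : ℝ) : ℂ) * Complex.I := by
    push_cast; ring
  have hc : Real.cos (2 * Real.pi / 3) = -1/2 := by
    have : 2 * Real.pi / 3 = Real.pi - Real.pi / 3 := by ring
    rw [this, Real.cos_pi_sub, Real.cos_pi_div_three]; ring
  have key : ∀ k : ℕ, (Complex.exp (2 * Real.pi * Complex.I / 3) ^ k).re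
      = Real.cos (k * (2 * Real.pi / 3)) := by
    intro k
    rw [← Complex.exp_nat_mul, h0, ← mul_assoc]
    have : ((k : ℂ) * ((2 * Real.pi / 3 : ℝ) : ℂ)) = ((k * (2 * Real.pi / 3) : ℝ) : ℂ) := by
      push_cast; ring
    rw [this, Complex.exp_ofReal_mul_I_re]
  rw [key]
  have ha : a = 0 ∨ a = 1 ∨ a = 2 := by revert a; decide
  rcases ha with rfl | rfl | rfl
  · simp [rr]
  · have : (1 : ZMod 3).val = 1 := rfl
    rw [this, rr, if_neg (by decide)]; simpa using hc
  · have : (2 : ZMod 3).val = 2 := rfl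
    rw [this, rr, if_neg (by decide)]
    push_cast
    rw [Real.cos_two_mul, hc]; norm_num

lemma rr_sum (a t : ZMod 3) : rr a + rr (a - t) + rr (a + t) = if t = 0 then 3 * rr a else 0 := by
  have ha : a = 0 ∨ a = 1 ∨ a = 2 := by revert a; decide
  have ht : t = 0 ∨ t = 1 ∨ t = 2 := by revert t; decide
  rcases ht with rfl | ht
  · simp; ring
  · have e1 : (1 : ZMod 3) + 1 = 2 := by decide
    have e2 : (2 : ZMod 3) + 1 = 0 := by decide
    have e3 : (1 : ZMod 3) + 2 = 0 := by decide
    have e4 : (2 : ZMod 3) + 2 = 1 := by decide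
    have e5 : (1 : ZMod 3) - 2 = 2 := by decide
    have e6 : (2 : ZMod 3) - 1 = 1 := by decide
    have e7 : (0 : ZMod 3) - 1 = 2 := by decide
    have e8 : (0 : ZMod 3) - 2 = 1 := by decide
    have f1 : (1 : ZMod 3) ≠ 0 := by decide
    have f2 : (2 : ZMod 3) ≠ 0 := by decide
    rcases ha with rfl | rfl | rfl <;> rcases ht with rfl | rfl <;>
      simp only [rr, e1, e2, e3, e4, e5, e6, e7, e8, f1, f2, sub_self, zero_add, if_true, if_false] <;>
      norm_num

lemma exists_dual {n : ℕ} {u : Fin n → ZMod 3} (hu : u ≠ 0) : ∃ y, u ⬝ᵥ y = 1 := by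
  obtain ⟨i, hi⟩ := Function.ne_iff.mp hu
  have : ∀ a : ZMod 3, a ≠ 0 → a * a = 1 := by decide
  exact ⟨Pi.single i (u i), by rw [dotProduct_single]; exact this _ hi⟩

lemma count {n : ℕ} {u : Fin n → ZMod 3} (hu : u ≠ 0) :
    ∑ x : Fin n → ZMod 3, (if u ⬝ᵥ x = 0 then (3:ℝ) else 0) = 3 ^ n := by
  obtain ⟨y, hy⟩ := exists_dual hu
  set h : (Fin n → ZMod 3) → ℝ := fun x => if u ⬝ᵥ x = 0 then (3:ℝ) else 0 with hh
  have h1 : ∑ x, h (x + y) = ∑ x, h x := Equiv.sum_comp (Equiv.addRight y) h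
  have h2 : ∑ x, h (x - y) = ∑ x, h x := Equiv.sum_comp (Equiv.subRight y) h
  have h3 : ∑ x, (h x + h (x + y) + h (x - y)) = ∑ x : Fin n → ZMod 3, (3 : ℝ) := by
    refine Finset.sum_congr rfl fun x _ => ?_
    simp only [hh, dotProduct_add, dotProduct_sub, hy]
    generalize u ⬝ᵥ x = t
    have ht : (t = 0 ∧ t + 1 ≠ 0 ∧ t - 1 ≠ 0) ∨ (t ≠ 0 ∧ t + 1 = 0 ∧ t - 1 ≠ 0) ∨
      (t ≠ 0 ∧ t + 1 ≠ 0 ∧ t - 1 = 0) := by revert t; decide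
    rcases ht with ⟨a, b, c⟩ | ⟨a, b, c⟩ | ⟨a, b, c⟩ <;> rw [if_congr (iff_of_eq rfl) rfl rfl] <;>
      simp [a, b, c]
  rw [Finset.sum_add_distrib, Finset.sum_add_distrib, h1, h2] at h3
  simp at h3
  linarith

lemma sum_eq_iff {n : ℕ} (A B : (Fin n → ZMod 3) → ℝ) (h : ∀ x, A x ≤ B x) :
    ∑ x, A x = ∑ x, B x ↔ ∀ x, A x = B x := by
  rw [Finset.sum_eq_sum_iff_of_le fun x _ => h x]; simp

lemma rr_le (a : ZMod 3) : rr a ≤ 1 := by unfold rr; split_ifs <;> norm_num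

lemma rr_one (a : ZMod 3) : rr a = 1 ↔ a = 0 := by unfold rr; split_ifs with h <;> simp [h]; norm_num

lemma walsh_re {n : ℕ} (f : (Fin n → ZMod 3) → ZMod 3) (walsh : (Fin n → ZMod 3) → ℂ)
    (hwalsh : ∀ w : Fin n → ZMod 3, walsh w = ∑ x : Fin n → ZMod 3,
      Complex.exp (2 * Real.pi * Complex.I / 3) ^ ((f x - w ⬝ᵥ x).val)) (w : Fin n → ZMod 3) :
    (walsh w).re = ∑ x, rr (f x - w ⬝ᵥ x) := by
  rw [hwalsh, Complex.re_sum]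
  exact Finset.sum_congr rfl fun x _ => re_pow _

lemma L0 {n : ℕ} (f : (Fin n → ZMod 3) → ZMod 3) (walsh : (Fin n → ZMod 3) → ℂ)
    (hw : ∀ w, (walsh w).re = ∑ x, rr (f x - w ⬝ᵥ x)) (w u : Fin n → ZMod 3) :
    (walsh w).re + (walsh (w + u)).re + (walsh (w - u)).re
      = ∑ x, if u ⬝ᵥ x = 0 then 3 * rr (f x - w ⬝ᵥ x) else 0 := by
  rw [hw, hw, hw, ← Finset.sum_add_distrib, ← Finset.sum_add_distrib]
  refine Finset.sum_congr rfl fun x _ => ?_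
  rw [← rr_sum, add_dotProduct, sub_dotProduct]
  have e1 : f x - (w ⬝ᵥ x + u ⬝ᵥ x) = f x - w ⬝ᵥ x - u ⬝ᵥ x := by ring
  have e2 : f x - (w ⬝ᵥ x - u ⬝ᵥ x) = f x - w ⬝ᵥ x + u ⬝ᵥ x := by ring
  rw [e1, e2]

lemma L1 {n : ℕ} (f : (Fin n → ZMod 3) → ZMod 3) (walsh : (Fin n → ZMod 3) → ℂ)
    (hw : ∀ w, (walsh w).re = ∑ x, rr (f x - w ⬝ᵥ x)) (w u : Fin n → ZMod 3) (hu : u ≠ 0) :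
    (walsh w).re + (walsh (w + u)).re + (walsh (w - u)).re = 3 ^ n ↔
    ∀ x, u ⬝ᵥ x = 0 → f x - w ⬝ᵥ x = 0 := by
  rw [L0 f walsh hw, ← count hu, sum_eq_iff]
  · refine forall_congr' fun x => ?_
    have h1 := rr_one (f x - w ⬝ᵥ x)
    by_cases h : u ⬝ᵥ x = 0
    · simp only [h, if_true, true_imp_iff, ← h1]
      constructor <;> intro <;> linarith
    · simp [h]
  · intro x
    have := rr_le (f x - w ⬝ᵥ x)
    split_ifs <;> linarith

lemma L2 {n : ℕ} (f : (Fin n → ZMod 3) → ZMod 3) (walsh : (Fin n → ZMod 3) → ℂ)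
    (hw : ∀ w, (walsh w).re = ∑ x, rr (f x - w ⬝ᵥ x)) (w u : Fin n → ZMod 3) (hu : u ≠ 0) :
    (walsh (w + u)).re + (walsh (w - u)).re - 2 * (walsh w).re = 3 ^ n ↔
    ∀ x, f x - w ⬝ᵥ x = 0 → u ⬝ᵥ x = 0 := by
  have h0 := L0 f walsh hw w u
  have e1 : (walsh (w + u)).re + (walsh (w - u)).re - 2 * (walsh w).re =
      ∑ x, ((if u ⬝ᵥ x = 0 then 3 * rr (f x - w ⬝ᵥ x) else 0) - 3 * rr (f x - w ⬝ᵥ x)) := by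
    rw [Finset.sum_sub_distrib, ← h0, ← Finset.mul_sum, ← hw]; ring
  have e2 : (3 : ℝ) ^ n = ∑ x, (3/2 - (1/2) * (if u ⬝ᵥ x = 0 then (3:ℝ) else 0)) := by
    rw [Finset.sum_sub_distrib, ← Finset.mul_sum, count hu]
    simp; ring
  rw [e1, e2, eq_comm]
  have key : ∀ x, ((if u ⬝ᵥ x = 0 then 3 * rr (f x - w ⬝ᵥ x) else 0) - 3 * rr (f x - w ⬝ᵥ x))
      ≤ (3/2 - (1/2) * (if u ⬝ᵥ x = 0 then (3:ℝ) else 0)) ∧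
      (((if u ⬝ᵥ x = 0 then 3 * rr (f x - w ⬝ᵥ x) else 0) - 3 * rr (f x - w ⬝ᵥ x))
      = (3/2 - (1/2) * (if u ⬝ᵥ x = 0 then (3:ℝ) else 0)) ↔
        (f x - w ⬝ᵥ x = 0 → u ⬝ᵥ x = 0)) := by
    intro x
    unfold rr
    by_cases h : u ⬝ᵥ x = 0 <;> by_cases h' : f x - w ⬝ᵥ x = 0 <;> simp only [h, h', if_true, if_false] <;> norm_num
  rw [eq_comm, sum_eq_iff _ _ fun x => (key x).1]
  exact forall_congr' fun x => (key x).2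



theorem stmt17 (n : ℕ) (hn : 1 ≤ n)
    (f : (Fin n → ZMod 3) → ZMod 3) (hf0 : f 0 = 0)
    (hf : ∀ v : Fin n → ZMod 3, ∃ x, f x ≠ v ⬝ᵥ x)
    (C : Set ({x : Fin n → ZMod 3 // x ≠ 0} → ZMod 3))
    (hC : C = {c | ∃ (α : ZMod 3) (w : Fin n → ZMod 3),
      c = fun x => α * f x.1 + w ⬝ᵥ x.1})
    (walsh : (Fin n → ZMod 3) → ℂ)
    (hwalsh : ∀ w : Fin n → ZMod 3, walsh w = ∑ x : Fin n → ZMod 3,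
      Complex.exp (2 * Real.pi * Complex.I / 3) ^ ((f x - w ⬝ᵥ x).val))
    :
    (∀ c ∈ C, c ≠ 0 → ∀ c' ∈ C, (∀ i, c' i ≠ 0 → c i ≠ 0) →
        ∃ lam : ZMod 3, c' = lam • c) ↔
    (∀ w1 w2 w3 : Fin n → ZMod 3, w1 ≠ w2 → w1 ≠ w3 → w2 ≠ w3 → w1 + w2 + w3 = 0 →
      (walsh w1).re + (walsh w2).re + (walsh w3).re ≠ 3 ^ n ∧
      (walsh w1).re + (walsh w2).re - 2 * (walsh w3).re ≠ 3 ^ n) := by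
  have hw := walsh_re f walsh hwalsh
  have a2 : ∀ a : ZMod 3, a ≠ 0 → a * a = 1 := by decide
  have dn : ∀ u : Fin n → ZMod 3, u ≠ 0 → u ≠ -u := by
    intro u hu h
    apply hu
    ext i
    have := congrFun h i
    have d : ∀ a : ZMod 3, a = -a → a = 0 := by decide
    exact d _ this
  have tri : ∀ w u : Fin n → ZMod 3, w + (w + u) + (w - u) = 0 := by
    intro w u; ext i
    simp only [Pi.add_apply, Pi.sub_apply, Pi.zero_apply]
    generalize w i = a
    generalize u i = b
    revert a b; decide
  subst hC
  constructor
  · intro hmin w1 w2 w3 h12 h13 h23 hs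
    constructor
    · intro he
      have hu : w2 - w1 ≠ 0 := sub_ne_zero.mpr h12.symm
      have e3 : w3 = w1 - (w2 - w1) := by
        ext i
        have := congrFun hs i
        have d : ∀ a b c : ZMod 3, a + b + c = 0 → c = a - (b - a) := by decide
        exact d _ _ _ this
      have e2 : w2 = w1 + (w2 - w1) := by abel
      generalize w2 - w1 = u at *
      subst e2 e3
      rw [L1 f walsh hw w1 u hu] at he
      obtain ⟨y, hy⟩ := exists_dual hu
      have hy0 : y ≠ 0 := by rintro rfl; simp at hy
      obtain ⟨lam, hl⟩ := hmin (fun x => 0 * f x.1 + u ⬝ᵥ x.1) ⟨0, u, rfl⟩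
        (fun h => by have := congrFun h ⟨y, hy0⟩; simp [hy] at this)
        (fun x => 1 * f x.1 + (-w1) ⬝ᵥ x.1) ⟨1, -w1, rfl⟩
        (fun x hx h => hx (by
          have := he x.1 (by simpa using h)
          rw [neg_dotProduct, one_mul, ← sub_eq_add_neg, this]))
      obtain ⟨x, hx⟩ := hf (w1 + lam • u)
      apply hx
      by_cases hx0 : x = 0
      · subst hx0; simp [hf0]
      · have := congrFun hl ⟨x, hx0⟩
        simp [smul_dotProduct, add_dotProduct] at this ⊢
        linear_combination this
    · intro he
      have hu : w1 - w3 ≠ 0 := sub_ne_zero.mpr h13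
      have e2 : w2 = w3 - (w1 - w3) := by
        ext i
        have := congrFun hs i
        have d : ∀ a b c : ZMod 3, a + b + c = 0 → b = c - (a - c) := by decide
        exact d _ _ _ this
      have e1 : w1 = w3 + (w1 - w3) := by abel
      generalize w1 - w3 = u at *
      subst e1 e2
      rw [L2 f walsh hw w3 u hu] at he
      obtain ⟨y, hy⟩ := exists_dual hu
      have hy0 : y ≠ 0 := by rintro rfl; simp at hy
      obtain ⟨lam, hl⟩ := hmin (fun x => 1 * f x.1 + (-w3) ⬝ᵥ x.1) ⟨1, -w3, rfl⟩
        (fun h => by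
          obtain ⟨x, hx⟩ := hf w3
          apply hx
          by_cases hx0 : x = 0
          · subst hx0; simp [hf0]
          · have := congrFun h ⟨x, hx0⟩
            simp at this
            linear_combination this)
        (fun x => 0 * f x.1 + u ⬝ᵥ x.1) ⟨0, u, rfl⟩
        (fun x hx h => hx (by
          have := he x.1 (by rw [← h, neg_dotProduct]; ring)
          simpa using this))
      have hl0 : lam ≠ 0 := by
        rintro rfl
        have := congrFun hl ⟨y, hy0⟩
        simp [hy] at this
      obtain ⟨x, hx⟩ := hf (w3 + lam • u)
      apply hx
      by_cases hx0 : x = 0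
      · subst hx0; simp [hf0]
      · have := congrFun hl ⟨x, hx0⟩
        simp [smul_dotProduct, add_dotProduct] at this ⊢
        linear_combination (-lam) * this - (f x - w3 ⬝ᵥ x) * a2 lam hl0
  · rintro hW _ ⟨α, w, rfl⟩ hc0 _ ⟨α', w', rfl⟩ hsupp
    have hz : ∀ x, α * f x + w ⬝ᵥ x = 0 → α' * f x + w' ⬝ᵥ x = 0 := by
      intro x hx
      by_cases hx0 : x = 0
      · subst hx0; simp [hf0]
      · by_contra h
        exact hsupp ⟨x, hx0⟩ h hx
    by_cases hα : α = 0
    · subst hα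
      have hw0 : w ≠ 0 := by
        rintro rfl
        apply hc0; ext x; simp
      by_cases hα' : α' = 0
      · subst hα'
        obtain ⟨y, hy⟩ := exists_dual hw0
        refine ⟨w' ⬝ᵥ y, ?_⟩
        ext x
        have := hz (x.1 - (w ⬝ᵥ x.1) • y) (by simp [dotProduct_sub, dotProduct_smul, hy])
        simp [dotProduct_sub, dotProduct_smul] at this ⊢
        linear_combination this
      · exfalso
        have h1 : -α' • w' ≠ -α' • w' + w := by simpa using hw0
        have h2 : -α' • w' ≠ -α' • w' - w := by
          intro h; exact hw0 (by simpa using (sub_eq_self.mp h.symm))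
        have h3 : -α' • w' + w ≠ -α' • w' - w := by
          intro h; rw [sub_eq_add_neg] at h; exact dn w hw0 (add_left_cancel h)
        apply (hW _ _ _ h1 h2 h3 (tri _ _)).1
        rw [L1 f walsh hw _ w hw0]
        intro x hx
        have := hz x (by simp [hx])
        simp only [neg_smul, neg_dotProduct, smul_dotProduct, smul_eq_mul]
        linear_combination α' * this - f x * a2 _ hα'
    · by_cases hu : w' - (α' * α) • w = 0
      · refine ⟨α' * α, ?_⟩
        rw [sub_eq_zero] at hu
        ext x
        simp only [hu, Pi.smul_apply, smul_eq_mul, smul_dotProduct]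
        linear_combination (-α' * f x.1) * a2 _ hα
      · exfalso
        have hu' : w' - (α' * α) • w = w' - (α' * α) • w := rfl
        generalize hU : w' - (α' * α) • w = u at hu
        have h1 : -α • w ≠ -α • w + u := by simpa using hu
        have h2 : -α • w ≠ -α • w - u := by
          intro h; exact hu (by simpa using (sub_eq_self.mp h.symm))
        have h3 : -α • w + u ≠ -α • w - u := by
          intro h; rw [sub_eq_add_neg] at h; exact dn u hu (add_left_cancel h)
        apply (hW _ _ _ h3 h1.symm h2.symm (by rw [← tri (-α • w) u]; abel)).2
        rw [L2 f walsh hw _ u hu]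
        intro x hx
        simp only [neg_smul, neg_dotProduct, smul_dotProduct, smul_eq_mul] at hx
        have hx' : α * f x + w ⬝ᵥ x = 0 := by
          linear_combination α * hx - (w ⬝ᵥ x) * a2 _ hα
        have := hz x hx'
        rw [← hU]
        simp only [sub_dotProduct, smul_dotProduct, smul_eq_mul]
        linear_combination this - α' * α * hx' + α' * f x * a2 _ hα
end

section
/- Let q be a prime power, F_q the finite field with q elements, and n a positive integer. For any two vectors w_1, w_2 ∈ F_q^n, supp(w_1) ⊆ supp(w_2) if and only if Σ_{c ∈ F_q, c ≠ 0} wt(w_2 + c·w_1) = (q − 1)·wt(w_2) − wt(w_1). -/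
open Matrix Finset

theorem coord_sum_aux (F : Type*) [Field F] [Fintype F] [DecidableEq F] (a b : F) :
    (∑ c ∈ Finset.univ \ {(0 : F)}, (if b + c * a ≠ 0 then (1 : ℤ) else 0)) =
      ((Fintype.card F : ℤ) - 1) * (if b ≠ 0 then 1 else 0) - (if a ≠ 0 then 1 else 0)
        + (Fintype.card F : ℤ) * (if a ≠ 0 ∧ b = 0 then 1 else 0) := by
  have h := Finset.sum_sdiff (Finset.subset_univ {(0 : F)})
    (f := fun c => if b + c * a ≠ 0 then (1 : ℤ) else 0)
  rw [Finset.sum_singleton] at h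
  rw [eq_sub_of_add_eq h]
  by_cases ha : a = 0
  · subst ha
    by_cases hb : b = 0 <;> simp [hb]
  · have key : ∀ c : F, (if b + c * a ≠ 0 then (1 : ℤ) else 0)
        = 1 - (if c = -b / a then 1 else 0) := by
      intro c
      have : b + c * a = 0 ↔ c = -b / a := by
        rw [eq_div_iff ha, add_comm, add_eq_zero_iff_eq_neg]
      by_cases hc : c = -b / a
      · simp [hc]
        rw [← hc]; exact this.2 hc
      · simp [hc, mt this.1 hc]
    rw [Finset.sum_congr rfl (fun c _ => key c)]
    by_cases hb : b = 0 <;> simp [hb, ha]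
    ring

theorem hammingNorm_sum_aux (F : Type*) [Field F] [DecidableEq F] (n : ℕ) (w : Fin n → F) :
    (hammingNorm w : ℤ) = ∑ i, if w i ≠ 0 then (1 : ℤ) else 0 := by
  rw [Finset.sum_boole]; rfl

theorem stmt18 (F : Type*) [Field F] [Fintype F] [DecidableEq F] (q n : ℕ)
    (hq : Fintype.card F = q) (w1 w2 : Fin n → F) :
    {i | w1 i ≠ 0} ⊆ {i | w2 i ≠ 0} ↔
      (∑ c ∈ Finset.univ \ {(0 : F)}, (hammingNorm (w2 + c • w1) : ℤ)) =
        ((q : ℤ) - 1) * (hammingNorm w2 : ℤ) - (hammingNorm w1 : ℤ) := by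
  have hq0 : (q : ℤ) ≠ 0 := by
    rw [← hq]; exact_mod_cast Fintype.card_ne_zero
  have e : (∑ c ∈ Finset.univ \ {(0 : F)}, (hammingNorm (w2 + c • w1) : ℤ)) =
      ((q : ℤ) - 1) * (hammingNorm w2 : ℤ) - (hammingNorm w1 : ℤ)
        + q * ∑ i, (if w1 i ≠ 0 ∧ w2 i = 0 then (1 : ℤ) else 0) := by
    simp only [hammingNorm_sum_aux]
    rw [Finset.sum_comm, Finset.mul_sum, Finset.mul_sum, ← Finset.sum_sub_distrib,
      ← Finset.sum_add_distrib]
    refine Finset.sum_congr rfl fun i _ => ?_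
    rw [← hq]
    exact coord_sum_aux F (w1 i) (w2 i)
  rw [e, add_eq_left, mul_eq_zero, or_iff_right hq0,
    Finset.sum_eq_zero_iff_of_nonneg (fun i _ => by split_ifs <;> simp)]
  simp only [Set.subset_def, Set.mem_ofPred_eq]
  constructor
  · intro h i _
    rw [if_neg]
    exact fun hh => h i hh.1 hh.2
  · intro h i h1 h2
    have := h i (Finset.mem_univ i)
    simp [h1, h2] at this
end

section
/- (Ashikhmin–Barg) Let p be a prime and let C be an F_p-linear code in F_p^n, i.e. an F_p-linear subspace of F_p^n. Let wt_min denote the minimum Hamming weight of a nonzero codeword of C and wt_max the maximum Hamming weight of a codeword of C. If wt_min/wt_max > (p − 1)/p (equivalently, p·wt_min > (p − 1)·wt_max), then C is minimal: for every nonzero codeword c ∈ C and every codeword c' ∈ C with supp(c') ⊆ supp(c), there exists λ ∈ F_p with c' = λ·c. -/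
open Matrix Finset

theorem stmt19 (p : ℕ) (hp : p.Prime) (n : ℕ)
    (C : Submodule (ZMod p) (Fin n → ZMod p)) (wmin wmax : ℕ)
    (hmin : IsLeast {m : ℕ | ∃ c ∈ C, c ≠ 0 ∧ hammingNorm c = m} wmin)
    (hmax : IsGreatest {m : ℕ | ∃ c ∈ C, hammingNorm c = m} wmax)
    (h : p * wmin > (p - 1) * wmax) :
    ∀ c ∈ C, c ≠ 0 → ∀ c' ∈ C, {i | c' i ≠ 0} ⊆ {i | c i ≠ 0} →
      ∃ lam : ZMod p, c' = lam • c := by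
  intro c hc hc0 c' hc' hsub
  haveI : Fact p.Prime := ⟨hp⟩
  by_contra! hne
  have h1 : ∀ l : ZMod p, wmin ≤ hammingNorm (c' - l • c) := fun l =>
    hmin.2 ⟨c' - l • c, C.sub_mem hc' (C.smul_mem l hc), sub_ne_zero.2 (hne l), rfl⟩
  have h2 : hammingNorm c ≤ wmax := hmax.2 ⟨c, hc, rfl⟩
  have h3 : p * wmin ≤ ∑ l : ZMod p, hammingNorm (c' - l • c) := by
    calc p * wmin = ∑ _l : ZMod p, wmin := by simp [ZMod.card]
      _ ≤ _ := Finset.sum_le_sum fun l _ => h1 l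
  have h4 : ∀ i, (∑ l : ZMod p, if (c' - l • c) i ≠ 0 then 1 else 0)
      ≤ (p - 1) * (if c i ≠ 0 then 1 else 0) := by
    intro i
    by_cases hi : c i = 0
    · have hi' : c' i = 0 := by
        by_contra hx
        exact hsub hx hi
      simp [hi, hi']
    · rw [← Finset.card_filter, if_pos hi, mul_one]
      have hs : (Finset.univ.filter fun l : ZMod p => (c' - l • c) i ≠ 0)
          ⊆ Finset.univ.erase (c' i / c i) := by
        intro l hl
        simp only [Finset.mem_filter, Finset.mem_univ, true_and] at hl
        simp only [Finset.mem_erase, Finset.mem_univ, and_true]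
        rintro rfl
        apply hl
        simp [hi]
      refine (Finset.card_le_card hs).trans ?_
      rw [Finset.card_erase_of_mem (Finset.mem_univ _), Finset.card_univ, ZMod.card]
  have h5 : ∑ l : ZMod p, hammingNorm (c' - l • c) ≤ (p - 1) * hammingNorm c := by
    simp only [hammingNorm, Finset.card_filter]
    rw [Finset.sum_comm, Finset.mul_sum]
    exact Finset.sum_le_sum fun i _ => h4 i
  have h6 := Nat.mul_le_mul_left (p - 1) h2
  omega
end
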